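/- Let h be a concave cocirculation in a convex triangular grid G. Then there exists an integer concave cocirculation h' in G such that h'(e)=h(e) for all edges e ∈ O_h ∪ I_h, where O_h is the set of boundary edges e of G with h(e) ∈ ℤ, and I_h is the set of edges contained in little triangles Δ such that h takes integer values on all three edges of Δ. -/

import Mathlib

open scoped BigOperators

attribute [local instance] Classical.propDecidable

noncomputable section

/-- Points of the plane. -/
abbrev Pt : Type := ℝ × ℝ

/-- Directed edges: ordered pairs of points. -/
abbrev Ed : Type := Pt × Pt

/-- The three generating vectors ξ₁ = (1,0), ξ₂ = (−1/2, √3/2), ξ₃ = (−1/2, −√3/2). -/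
noncomputable def xiv : Fin 3 → Pt
  | 0 => ((1 : ℝ), (0 : ℝ))
  | 1 => (-(1 / 2 : ℝ), Real.sqrt 3 / 2)
  | 2 => (-(1 / 2 : ℝ), -(Real.sqrt 3 / 2))

/-- A little (lattice) triangle of the triangular grid, given by its base point and
its orientation (`up = true` for an upward triangle). -/
structure GridTriangle : Type where
  base : Pt
  up : Bool

noncomputable def GridTriangle.v0 (T : GridTriangle) : Pt := T.base
noncomputable def GridTriangle.v1 (T : GridTriangle) : Pt := T.base + xiv 0
noncomputable def GridTriangle.v2 (T : GridTriangle) : Pt :=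
  if T.up then T.base + xiv 0 + xiv 1 else T.base + xiv 0 + xiv 2

/-- The three directed edges of the 3-circuit surrounding a little triangle;
each has direction ξ₁, ξ₂ or ξ₃. -/
noncomputable def GridTriangle.e0 (T : GridTriangle) : Ed := (T.v0, T.v1)
noncomputable def GridTriangle.e1 (T : GridTriangle) : Ed := (T.v1, T.v2)
noncomputable def GridTriangle.e2 (T : GridTriangle) : Ed := (T.v2, T.v0)

noncomputable def GridTriangle.edgeFinset (T : GridTriangle) : Finset Ed := {T.e0, T.e1, T.e2}

/-- The closed region spanned by a little triangle. -/
noncomputable def GridTriangle.region (T : GridTriangle) : Set Pt :=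
  convexHull ℝ {T.v0, T.v1, T.v2}

/-- Vectors of the lattice generated by ξ₁ and ξ₂. -/
def IsLatticeVec (p : Pt) : Prop := ∃ m n : ℤ, p = (m : ℝ) • xiv 0 + (n : ℝ) • xiv 1

/-- A convex triangular grid: a finite nonempty set of little triangles of a common
translate of the triangular lattice whose union is a convex polygon.  (Its vertices,
edges, bounded faces and boundary are then those of the planar digraph formed by the
edges of the little triangles.) -/
structure ConvexGrid : Type where
  tris : Finset GridTriangle
  nonempty : tris.Nonempty
  aligned : ∀ T ∈ tris, ∀ T' ∈ tris, IsLatticeVec (T.base - T'.base)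
  convex : Convex ℝ (⋃ T ∈ tris, GridTriangle.region T)

/-- The region R(G) spanned by the grid. -/
noncomputable def ConvexGrid.region (G : ConvexGrid) : Set Pt :=
  ⋃ T ∈ G.tris, GridTriangle.region T

/-- The (directed) edge set E(G) of the grid. -/
noncomputable def ConvexGrid.edges (G : ConvexGrid) : Finset Ed :=
  G.tris.biUnion GridTriangle.edgeFinset

/-- The boundary edges B(G): edges lying in exactly one little triangle. -/
noncomputable def ConvexGrid.boundary (G : ConvexGrid) : Finset Ed :=
  G.edges.filter fun e => (G.tris.filter fun T => e ∈ T.edgeFinset).card = 1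

/-- A cocirculation: `h(e)+h(e')+h(e'')=0` around each little triangle. -/
def IsCocirculation (G : ConvexGrid) (h : Ed → ℝ) : Prop :=
  ∀ T ∈ G.tris, h T.e0 + h T.e1 + h T.e2 = 0

/-- `g` coincides with an affine function on `S`. -/
def AffineOn (g : Pt → ℝ) (S : Set Pt) : Prop :=
  ∃ φ : Pt →ᵃ[ℝ] ℝ, ∀ x ∈ S, g x = φ x

/-- A concave cocirculation: a cocirculation induced by a concave function on R(G)
which is affinely linear within each little triangle. -/
def IsConcaveCocirculation (G : ConvexGrid) (h : Ed → ℝ) : Prop :=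
  IsCocirculation G h ∧
  ∃ g : Pt → ℝ, ConcaveOn ℝ G.region g ∧ (∀ T ∈ G.tris, AffineOn g T.region) ∧
    ∀ e ∈ G.edges, h e = g e.2 - g e.1

/-- The polyhedron C(G,h₀) of concave cocirculations agreeing with h₀ on F. -/
def CC (G : ConvexGrid) (F : Set Ed) (h₀ : Ed → ℝ) : Set (Ed → ℝ) :=
  {h | IsConcaveCocirculation G h ∧ ∀ e ∈ F, h e = h₀ e}

/-- `h` is a vertex (extreme point) of the set `C` of cocirculations, regarded as a
subset of ℝ^{E(G)} (only the coordinates on the edges of `G` matter). -/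
def IsVertexOf (G : ConvexGrid) (C : Set (Ed → ℝ)) (h : Ed → ℝ) : Prop :=
  h ∈ C ∧ ∀ h₁ ∈ C, ∀ h₂ ∈ C,
    (∀ e ∈ G.edges, h e = (h₁ e + h₂ e) / 2) → ∀ e ∈ G.edges, h₁ e = h₂ e

/-
On the lattice points of the grid consider all grid-concave functions that agree with the given one
up to rounding on `O_h ∪ I_h`, with increments bounded by a large integer. They form a polytope.
Among those with the largest sum of values choose an extreme point `g`; it is integral, for the
following reasons.

A maximal region on which `g` is affine is a flatspace. Give every lattice point of a flatspace half
the total length of the non-integral sides if it is interior, the length of the side if it lies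
inside a non-integral side, and `0` otherwise. These values agree on common sides, and adding a
small multiple of them to `g` preserves all constraints. By maximality they vanish, so that a
non-integral flatspace is a little triangle, a rhombus of two of them, or a trapezoid of height one
with integral long sides.

In such a configuration the edges that may move outnumber the independent conditions for moving them
so as to keep `g` affine on every rhombus on which it is affine. Hence, if some edge were
non-integral, `g` could be moved in two opposite directions, against extremality.
-/

namespace TriLattice

open Finset

/-! ### The triangular lattice -/

/-- Points of the triangular lattice, in coordinates with respect to `ξ₁` and `ξ₂`. -/
abbrev LPt : Type := ℤ × ℤ

/-- Counterclockwise rotation by 60 degrees in lattice coordinates. -/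
def rot : LPt →+ LPt where
  toFun u := (u.1 - u.2, u.1)
  map_zero' := rfl
  map_add' u v := by ext <;> simp only [Prod.fst_add, Prod.snd_add]; ring

/-- The cross product (signed area in units of a lattice parallelogram). -/
def cross : LPt →+ LPt →+ ℤ :=
  AddMonoidHom.mk' (fun u => AddMonoidHom.mk' (fun x => u.1 * x.2 - u.2 * x.1)
      fun x y => by simp only [Prod.fst_add, Prod.snd_add]; ring)
    fun u v => by
      ext
      simp only [AddMonoidHom.mk'_apply, AddMonoidHom.add_apply, Prod.fst_add, Prod.snd_add]
      ring

/-- The linear functional on the lattice with gradient `p`. -/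
def lin (p : ℝ × ℝ) : LPt →+ ℝ where
  toFun x := p.1 * x.1 + p.2 * x.2
  map_zero' := by simp
  map_add' x y := by simp only [Prod.fst_add, Prod.snd_add]; push_cast; ring

/-- The six unit directions of the triangular lattice, in counterclockwise order. -/
def dirs : Finset LPt := {(1, 0), (1, 1), (0, 1), (-1, 0), (-1, -1), (0, -1)}

lemma rot_apply (u : LPt) : rot u = (u.1 - u.2, u.1) := rfl

lemma cross_apply (u x : LPt) : cross u x = u.1 * x.2 - u.2 * x.1 := rfl

lemma lin_apply (p : ℝ × ℝ) (x : LPt) : lin p x = p.1 * x.1 + p.2 * x.2 := rfl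

lemma mem_dirs {u : LPt} : u ∈ dirs ↔ u = (1, 0) ∨ u = (1, 1) ∨ u = (0, 1) ∨ u = (-1, 0) ∨
    u = (-1, -1) ∨ u = (0, -1) := by simp [dirs]

@[simp] lemma rot_rot (u : LPt) : rot (rot u) = rot u - u := by
  ext <;> simp [rot_apply]

@[simp] lemma neg_sub_rot_sub_self (u : LPt) : -u - (rot u - u) = -rot u := by abel

@[simp] lemma cross_self (u : LPt) : cross u u = 0 := by
  rw [cross_apply]; ring

lemma rot_mem_dirs {u : LPt} (h : u ∈ dirs) : rot u ∈ dirs := by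
  rw [mem_dirs] at *
  rcases h with rfl | rfl | rfl | rfl | rfl | rfl <;> simp [rot_apply]

lemma neg_mem_dirs {u : LPt} (h : u ∈ dirs) : -u ∈ dirs := by
  rw [mem_dirs] at *
  rcases h with rfl | rfl | rfl | rfl | rfl | rfl <;> simp

lemma rot_sub_mem_dirs {u : LPt} (h : u ∈ dirs) : rot u - u ∈ dirs := by
  rw [← rot_rot]; exact rot_mem_dirs (rot_mem_dirs h)

lemma sub_rot_mem_dirs {u : LPt} (h : u ∈ dirs) : u - rot u ∈ dirs := by
  rw [← neg_sub]; exact neg_mem_dirs (rot_sub_mem_dirs h)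

lemma cross_rot {u : LPt} (h : u ∈ dirs) : cross u (rot u) = 1 := by
  rw [mem_dirs] at h
  rcases h with rfl | rfl | rfl | rfl | rfl | rfl <;> simp [rot_apply, cross_apply]

lemma cross_rot_self {u : LPt} (h : u ∈ dirs) : cross (rot u) u = -1 := by
  rw [← cross_rot h, cross_apply, cross_apply]
  ring

lemma lin_eq_cross {u : LPt} (hu : u ∈ dirs) (p : ℝ × ℝ) (d : LPt) :
    lin p d = cross d (rot u) * lin p u + cross u d * lin p (rot u) := by
  rw [mem_dirs] at hu
  rcases hu with rfl | rfl | rfl | rfl | rfl | rfl <;>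
    simp [rot_apply, cross_apply, lin_apply] <;> ring

lemma slope_ext {u : LPt} (hu : u ∈ dirs) {p q : ℝ × ℝ} (h₁ : lin p u = lin q u)
    (h₂ : lin p (rot u) = lin q (rot u)) : p = q := by
  have h (d : LPt) : lin p d = lin q d := by
    rw [lin_eq_cross hu p, lin_eq_cross hu q, h₁, h₂]
  ext
  · simpa [lin_apply] using h (1, 0)
  · simpa [lin_apply] using h (0, 1)

/-- The little triangle `v, v + u, v + rot u` has its vertices in `V`. As `u` runs over `dirs`,
every little triangle occurs three times, once for each counterclockwise side. -/
structure IsTriangle (V : Finset LPt) (v u : LPt) : Prop where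
  dir : u ∈ dirs
  base : v ∈ V
  tip : v + u ∈ V
  apex : v + rot u ∈ V

/-- The little triangle of `V` based at `v, v + u` on which `g` has gradient `p`. -/
structure HasSlope (V : Finset LPt) (g : LPt → ℝ) (p : ℝ × ℝ) (v u : LPt) : Prop
    extends IsTriangle V v u where
  slope_tip : g (v + u) - g v = lin p u
  slope_apex : g (v + rot u) - g v = lin p (rot u)

/-- The concavity defect of `g` across the common edge `v, v + u` of two little triangles. -/
def slack (g : LPt → ℝ) (v u : LPt) : ℝ :=
  g v + g (v + u) - g (v + rot u) - g (v + u - rot u)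

/-- If some point of `V` lies strictly beyond a side of a little triangle of `V`, then so does the
little triangle adjacent along that side. -/
def EdgeConvex (V : Finset LPt) : Prop :=
  ∀ v u x, IsTriangle V v u → x ∈ V → cross u (x - v) < 0 → v + u - rot u ∈ V

/-- The discrete form of a concave function on a convex polygon, affine on little triangles:
the slack is nonnegative on every rhombus of `V`. -/
structure GridConcave (V : Finset LPt) (g : LPt → ℝ) : Prop where
  edgeConvex : EdgeConvex V
  slack_nonneg {v u : LPt} : IsTriangle V v u → v + u - rot u ∈ V → 0 ≤ slack g v u

section Triangles

variable {V : Finset LPt} {g : LPt → ℝ} {p q : ℝ × ℝ} {v u x : LPt}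

lemma IsTriangle.rotate (h : IsTriangle V v u) : IsTriangle V (v + u) (rot u - u) where
  dir := rot_sub_mem_dirs h.dir
  base := h.tip
  tip := by simpa using h.apex
  apex := by simpa using h.base

lemma IsTriangle.rotate_twice (h : IsTriangle V v u) : IsTriangle V (v + rot u) (-rot u) := by
  simpa using h.rotate.rotate

lemma IsTriangle.opposite (h : IsTriangle V v u) (hx : v + u - rot u ∈ V) :
    IsTriangle V (v + u) (-u) where
  dir := neg_mem_dirs h.dir
  base := h.tip
  tip := by simpa using h.base
  apex := by simpa [sub_eq_add_neg] using hx

lemma IsTriangle.opposite_apex (h : IsTriangle V (v + u) (-u)) : v + u - rot u ∈ V := by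
  simpa [sub_eq_add_neg] using h.apex

lemma IsTriangle.exists_hasSlope (h : IsTriangle V v u) (g : LPt → ℝ) :
    ∃ p, HasSlope V g p v u := by
  refine ⟨(u.1 * (g (v + u) - g v) - u.2 * (g (v + rot u) - g v),
    (u.2 - u.1) * (g (v + u) - g v) + u.1 * (g (v + rot u) - g v)), h, ?_, ?_⟩ <;>
  · generalize g (v + u) - g v = a
    generalize g (v + rot u) - g v = b
    rcases mem_dirs.1 h.dir with rfl | rfl | rfl | rfl | rfl | rfl <;>
      simp [rot_apply, lin_apply]

lemma IsTriangle.exists_hasSlope_opposite (h : IsTriangle V v u) (hx : v + u - rot u ∈ V)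
    (g : LPt → ℝ) : ∃ q, HasSlope V g q (v + u) (-u) :=
  (h.opposite hx).exists_hasSlope g

lemma HasSlope.unique (h : HasSlope V g p v u) (h' : HasSlope V g q v u) : p = q :=
  slope_ext h.dir (h.slope_tip.symm.trans h'.slope_tip) (h.slope_apex.symm.trans h'.slope_apex)

lemma HasSlope.rotate (h : HasSlope V g p v u) : HasSlope V g p (v + u) (rot u - u) where
  toIsTriangle := h.toIsTriangle.rotate
  slope_tip := by
    rw [map_sub, ← h.slope_tip, ← h.slope_apex, add_add_sub_cancel]; ring
  slope_apex := by
    have := h.slope_tip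
    simp only [map_sub, rot_rot, sub_sub_cancel_left, map_neg, add_neg_cancel_right]
    linarith

lemma HasSlope.rotate_twice (h : HasSlope V g p v u) : HasSlope V g p (v + rot u) (-rot u) := by
  simpa using h.rotate.rotate

lemma HasSlope.opposite (h : HasSlope V g p v u) (hx : v + u - rot u ∈ V)
    (hs : slack g v u = 0) : HasSlope V g p (v + u) (-u) where
  toIsTriangle := h.toIsTriangle.opposite hx
  slope_tip := by
    rw [map_neg, ← h.slope_tip, add_neg_cancel_right]; ring
  slope_apex := by
    rw [map_neg, map_neg, ← h.slope_apex, ← sub_eq_add_neg]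
    unfold slack at hs; linarith

lemma HasSlope.slack_eq (h : HasSlope V g p v u) (h' : HasSlope V g q (v + u) (-u)) :
    slack g v u = lin q (rot u) - lin p (rot u) := by
  have hq := h'.slope_apex
  rw [map_neg, map_neg, ← sub_eq_add_neg] at hq
  have hp := h.slope_apex
  unfold slack; linarith

lemma HasSlope.lin_eq (h : HasSlope V g p v u) (h' : HasSlope V g q (v + u) (-u)) :
    lin p u = lin q u := by
  have hq := h'.slope_tip
  rw [map_neg, add_neg_cancel_right] at hq
  have hp := h.slope_tip
  linarith

/-- Squared norm (up to scaling) of the vector from the centroid of the triangle based at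
`v, v + u` to `x`; it measures the progress of a walk through triangles towards `x`. -/
def distSq (v u x : LPt) : ℕ :=
  let d := 3 • (x - v) - u - rot u
  (d.1 ^ 2 - d.1 * d.2 + d.2 ^ 2).toNat

lemma distSq_rotate (v u x : LPt) : distSq (v + u) (rot u - u) x = distSq v u x := by
  have h : 3 • (x - (v + u)) - (rot u - u) - rot (rot u - u) = 3 • (x - v) - u - rot u := by
    rw [map_sub, rot_rot]; abel
  simp only [distSq, h]

lemma distSq_opposite_lt (hu : u ∈ dirs) (h : cross u (x - v) < 0) :
    distSq (v + u) (-u) x < distSq v u x := by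
  have hpos (a b : ℤ) : 0 ≤ a ^ 2 - a * b + b ^ 2 := by
    nlinarith [sq_nonneg (a - b), sq_nonneg (a + b)]
  simp only [distSq]
  refine (fun hlt => (Int.toNat_lt_toNat ((hpos _ _).trans_lt hlt)).2 hlt) ?_
  obtain ⟨x₁, x₂⟩ := x
  obtain ⟨v₁, v₂⟩ := v
  rcases mem_dirs.1 hu with rfl | rfl | rfl | rfl | rfl | rfl <;>
    simp [rot_apply, cross_apply] at h ⊢ <;> nlinarith

lemma eq_vertex_or_cross_neg (hu : u ∈ dirs) (v x : LPt) :
    (x = v ∨ x = v + u ∨ x = v + rot u) ∨ cross u (x - v) < 0 ∨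
      cross (rot u - u) (x - (v + u)) < 0 ∨ cross (-rot u) (x - (v + rot u)) < 0 := by
  obtain ⟨x₁, x₂⟩ := x
  obtain ⟨v₁, v₂⟩ := v
  rcases mem_dirs.1 hu with rfl | rfl | rfl | rfl | rfl | rfl <;>
    simp [rot_apply, cross_apply] <;> omega

/-- Induction along a walk through little triangles towards the point `x`. -/
lemma EdgeConvex.walk_induction (hV : EdgeConvex V) (hx : x ∈ V) {motive : LPt → LPt → Prop}
    (base : ∀ u, IsTriangle V x u → motive x u)
    (turn : ∀ v u, IsTriangle V v u → motive (v + u) (rot u - u) → motive v u)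
    (step : ∀ v u, IsTriangle V v u → cross u (x - v) < 0 → v + u - rot u ∈ V →
      motive (v + u) (-u) → motive v u)
    (h : IsTriangle V v u) : motive v u := by
  induction hn : distSq v u x using Nat.strong_induction_on generalizing v u with
  | _ n ih =>
    have forward {v u} (h : IsTriangle V v u) (hd : distSq v u x = n)
        (hc : cross u (x - v) < 0) : motive v u :=
      have hop := hV v u x h hx hc
      step v u h hc hop (ih _ (hd ▸ distSq_opposite_lt h.dir hc) (h.opposite hop) rfl)
    have turn_twice (hm : motive (v + rot u) (-rot u)) : motive v u :=
      turn v u h (turn _ _ h.rotate (by simpa using hm))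
    have hd : distSq (v + u) (rot u - u) x = n := by rw [distSq_rotate, hn]
    have hd' : distSq (v + rot u) (-rot u) x = n := by
      rw [← hd, ← distSq_rotate (v + u)]; simp
    rcases eq_vertex_or_cross_neg h.dir v x with (rfl | rfl | rfl) | hc | hc | hc
    · exact base u h
    · exact turn v u h (base _ h.rotate)
    · exact turn_twice (base _ h.rotate_twice)
    · exact forward h hn hc
    · exact turn v u h (forward h.rotate hd hc)
    · exact turn_twice (forward h.rotate_twice hd' hc)

lemma GridConcave.le_affine (hg : GridConcave V g) (h : HasSlope V g p v u) (hx : x ∈ V) :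
    g x ≤ g v + lin p (x - v) := by
  refine hg.edgeConvex.walk_induction hx (motive := fun v u => ∀ p, HasSlope V g p v u →
    g x ≤ g v + lin p (x - v)) ?_ ?_ ?_ h.toIsTriangle p h
  · intro u _ p _
    simp
  · intro v u _ ih p h
    have := ih p h.rotate
    rw [← sub_sub, map_sub, ← h.slope_tip] at this
    linarith
  · intro v u ht hneg hop ih p h
    obtain ⟨q, hq⟩ := ht.exists_hasSlope_opposite hop g
    have hgx := ih q hq
    have hslack := hg.slack_nonneg ht hop
    have heq := h.lin_eq hq
    have hneg' : (cross u (x - v) : ℝ) ≤ 0 := by exact_mod_cast hneg.le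
    have htip := h.slope_tip
    rw [h.slack_eq hq] at hslack
    rw [← sub_sub, map_sub, lin_eq_cross h.dir q (x - v), ← heq] at hgx
    rw [lin_eq_cross h.dir p (x - v)]
    nlinarith [mul_nonneg (neg_nonneg.2 hneg') hslack]

end Triangles

/-! ### Flatspaces and their sides -/

/-- The three consecutive directions starting with `u`: those of the slots filled by a flatspace
at an inner vertex of its side in direction `u`. -/
def halfTurn (u : LPt) : Finset LPt := {u, rot u, rot u - u}

/-- The edge `v, v + u` lies on the boundary of the flatspace of `g` with slope `p`, that is, of
the union of the little triangles on which `g` has gradient `p`. -/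
def IsSide (V : Finset LPt) (g : LPt → ℝ) (p : ℝ × ℝ) (v u : LPt) : Prop :=
  HasSlope V g p v u ∧ ¬ HasSlope V g p (v + u) (-u)

section Flatspaces

variable {V : Finset LPt} {g : LPt → ℝ} {p q : ℝ × ℝ} {v u a b x : LPt}

lemma mem_halfTurn : b ∈ halfTurn a ↔ b = a ∨ b = rot a ∨ b = rot a - a := by
  simp [halfTurn]

lemma mem_halfTurn_iff_cross (ha : a ∈ dirs) (hb : b ∈ dirs) :
    b ∈ halfTurn a ↔ 0 ≤ cross a b ∧ 0 ≤ cross a (rot b) := by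
  rw [mem_halfTurn]
  rw [mem_dirs] at ha hb
  rcases ha with rfl | rfl | rfl | rfl | rfl | rfl <;>
    rcases hb with rfl | rfl | rfl | rfl | rfl | rfl <;> simp [rot_apply, cross_apply]

lemma eq_of_halfTurn_subset (ha : a ∈ dirs) (hb : b ∈ dirs) (h : halfTurn a ⊆ halfTurn b) :
    a = b := by
  have h₁ := h (mem_halfTurn.2 (.inl rfl))
  have h₂ := h (mem_halfTurn.2 (.inr (.inr rfl)))
  rw [mem_halfTurn] at h₁ h₂
  rw [mem_dirs] at hb
  rcases hb with rfl | rfl | rfl | rfl | rfl | rfl <;>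
    rcases h₁ with rfl | rfl | rfl <;> simp [rot_apply] at *

lemma dirs_eq (hu : u ∈ dirs) : dirs = {u, rot u, rot u - u, -u, -rot u, u - rot u} := by
  rcases mem_dirs.1 hu with rfl | rfl | rfl | rfl | rfl | rfl <;> ext ⟨x, y⟩ <;>
    simp [dirs, rot_apply] <;> tauto

lemma neg_notMem_halfTurn (ha : a ∈ dirs) : -a ∉ halfTurn a := by
  rw [mem_halfTurn_iff_cross ha (neg_mem_dirs ha), map_neg, map_neg, map_neg, cross_rot ha]
  simp

lemma sub_rot_notMem_halfTurn (ha : a ∈ dirs) : a - rot a ∉ halfTurn a := by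
  rw [mem_halfTurn_iff_cross ha (sub_rot_mem_dirs ha), map_sub, cross_self, cross_rot ha]
  simp

lemma hasSlope_neg_iff : HasSlope V g p (v + a) (-a) ↔ HasSlope V g p v (a - rot a) := by
  constructor
  · intro h
    simpa [neg_add_eq_sub] using h.rotate
  · intro h
    simpa using h.rotate_twice

lemma isSide_iff : IsSide V g p v a ↔ HasSlope V g p v a ∧ ¬ HasSlope V g p v (a - rot a) := by
  rw [IsSide, hasSlope_neg_iff]

lemma HasSlope.isSide_rot_iff (h : HasSlope V g p v a) :
    IsSide V g p (v + rot a) (-rot a) ↔ ¬ HasSlope V g p v (rot a) := by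
  rw [IsSide, neg_neg, add_neg_cancel_right]
  exact and_iff_right h.rotate_twice

lemma GridConcave.eq_affine (hg : GridConcave V g) (h : HasSlope V g p v a)
    (h' : HasSlope V g p x b) : g x = g v + lin p (x - v) := by
  have h₁ := hg.le_affine h h'.base
  have h₂ := hg.le_affine h' h.base
  rw [← neg_sub, map_neg] at h₂
  linarith

namespace IsSide

lemma cross_nonneg (h : IsSide V g p v a) (hg : GridConcave V g) (h' : HasSlope V g p x b) :
    0 ≤ cross a (x - v) := by
  by_contra! hneg
  have hop := hg.edgeConvex v a x h.1.toIsTriangle h'.base hneg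
  obtain ⟨q, hq⟩ := h.1.toIsTriangle.exists_hasSlope_opposite hop g
  have hslack : 0 < slack g v a :=
    (hg.slack_nonneg h.1.toIsTriangle hop).lt_of_ne' fun h₀ => h.2 (h.1.opposite hop h₀)
  have hle := hg.le_affine hq h'.base
  have heq := hg.eq_affine h.1 h'
  have htip := h.1.slope_tip
  rw [h.1.slack_eq hq] at hslack
  rw [← sub_sub, map_sub, lin_eq_cross h.1.dir q (x - v), ← h.1.lin_eq hq] at hle
  rw [lin_eq_cross h.1.dir p (x - v)] at heq
  have hneg' : (cross a (x - v) : ℝ) < 0 := by exact_mod_cast hneg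
  nlinarith [mul_pos (neg_pos.2 hneg') hslack]

lemma mem_halfTurn (h : IsSide V g p v a) (hg : GridConcave V g) (hb : HasSlope V g p v b) :
    b ∈ halfTurn a := by
  rw [mem_halfTurn_iff_cross h.1.dir hb.dir]
  have h₁ := h.cross_nonneg hg hb.rotate
  have h₂ := h.cross_nonneg hg hb.rotate_twice
  rw [add_sub_cancel_left] at h₁ h₂
  exact ⟨h₁, h₂⟩

lemma mem_halfTurn_tip (h : IsSide V g p v a) (hg : GridConcave V g)
    (hb : HasSlope V g p (v + a) b) : b ∈ halfTurn a := by
  rw [mem_halfTurn_iff_cross h.1.dir hb.dir]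
  have h₁ := h.cross_nonneg hg hb.rotate
  have h₂ := h.cross_nonneg hg hb.rotate_twice
  rw [add_assoc, add_sub_cancel_left, map_add, cross_self, zero_add] at h₁ h₂
  exact ⟨h₁, h₂⟩

lemma cross_eq_zero (h : IsSide V g p v a) (h' : IsSide V g p x a) (hg : GridConcave V g) :
    cross a (x - v) = 0 := by
  have h₁ := h.cross_nonneg hg h'.1
  have h₂ := h'.cross_nonneg hg h.1
  rw [← neg_sub, map_neg] at h₂
  omega

lemma opposite (h : IsSide V g p v a) (hq : HasSlope V g q (v + a) (-a)) :
    IsSide V g q (v + a) (-a) := by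
  refine ⟨hq, fun hqv => h.2 ?_⟩
  rw [neg_neg, add_neg_cancel_right] at hqv
  rwa [h.1.unique hqv]

lemma opposite_lin_rot_le {q' : ℝ × ℝ} (h : IsSide V g p v a) (h' : IsSide V g p x a)
    (hg : GridConcave V g) (hq : HasSlope V g q (v + a) (-a))
    (hq' : HasSlope V g q' (x + a) (-a)) : lin q (rot a) ≤ lin q' (rot a) := by
  have hle := hg.le_affine hq hq'.apex
  have heq := hg.eq_affine h.1.rotate h'.1.rotate
  have hslope := hq'.slope_apex
  have h₀ := h.cross_eq_zero h' hg
  have hd : x + a + -rot a - (v + a) = x - v - rot a := by abel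
  simp only [map_neg] at hle hslope
  rw [add_sub_add_right_eq_sub, lin_eq_cross h.1.dir p, h₀] at heq
  rw [hd, map_sub, lin_eq_cross h.1.dir q (x - v), h₀, ← h.1.lin_eq hq] at hle
  push_cast at hle heq
  linarith

lemma opposite_of_opposite (h : IsSide V g p v a) (h' : IsSide V g p x a) (hg : GridConcave V g)
    (hq : HasSlope V g q (v + a) (-a)) : HasSlope V g q (x + a) (-a) := by
  have hop : x + a - rot a ∈ V := by
    refine hg.edgeConvex x a _ h'.1.toIsTriangle hq.opposite_apex ?_
    have hd : v + a - rot a - x = v - x + a - rot a := by abel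
    rw [hd, map_sub, map_add, h'.cross_eq_zero h hg, cross_self, cross_rot h.1.dir]
    norm_num
  obtain ⟨q', hq'⟩ := h'.1.toIsTriangle.exists_hasSlope_opposite hop g
  suffices q = q' by rwa [this]
  exact slope_ext h.1.dir ((h.1.lin_eq hq).symm.trans (h'.1.lin_eq hq'))
    (le_antisymm (h.opposite_lin_rot_le h' hg hq hq') (h'.opposite_lin_rot_le h hg hq' hq))

end IsSide

/-- `v` is an interior vertex of the flatspace with slope `p`. -/
def IsInteriorVertex (V : Finset LPt) (g : LPt → ℝ) (p : ℝ × ℝ) (v : LPt) : Prop :=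
  ∀ b ∈ dirs, HasSlope V g p v b

/-- `v` lies in the relative interior of the side with direction `u` of the flatspace with
slope `p`. -/
def IsSideVertex (V : Finset LPt) (g : LPt → ℝ) (p : ℝ × ℝ) (v u : LPt) : Prop :=
  ∀ b, HasSlope V g p v b ↔ b ∈ halfTurn u

namespace IsSideVertex

lemma hasSlope (h : IsSideVertex V g p v a) : HasSlope V g p v a :=
  (h a).2 (mem_halfTurn.2 (.inl rfl))

lemma hasSlope_rot (h : IsSideVertex V g p v a) : HasSlope V g p v (rot a) :=
  (h _).2 (mem_halfTurn.2 (.inr (.inl rfl)))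

lemma hasSlope_rot_sub (h : IsSideVertex V g p v a) : HasSlope V g p v (rot a - a) :=
  (h _).2 (mem_halfTurn.2 (.inr (.inr rfl)))

lemma dir (h : IsSideVertex V g p v a) : a ∈ dirs := h.hasSlope.dir

lemma eq (h : IsSideVertex V g p v a) (hu : u ∈ dirs)
    (hslot : ∀ b, HasSlope V g p v b → b ∈ halfTurn u) : a = u :=
  eq_of_halfTurn_subset h.dir hu fun b hb => hslot b ((h b).2 hb)

lemma isSide (h : IsSideVertex V g p v a) : IsSide V g p v a :=
  isSide_iff.2 ⟨h.hasSlope, fun hn => sub_rot_notMem_halfTurn h.dir ((h _).1 hn)⟩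

lemma isSide_sub (h : IsSideVertex V g p v a) : IsSide V g p (v - a) a := by
  refine ⟨by simpa [sub_eq_add_neg] using h.hasSlope_rot_sub.rotate_twice, fun hn => ?_⟩
  rw [sub_add_cancel] at hn
  exact neg_notMem_halfTurn h.dir ((h _).1 hn)

/-- The edges before and after `v` on the side border the same flatspace `q` from below, and the
triangle between them is squeezed into that flatspace as well. -/
lemma exists_opposite (h : IsSideVertex V g p v a) (hg : GridConcave V g) (hx : x ∈ V)
    (hneg : cross a (x - v) < 0) : ∃ q, ∀ b ∈ halfTurn (-a), HasSlope V g q v b := by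
  have hop : v + a - rot a ∈ V := hg.edgeConvex v a x h.hasSlope.toIsTriangle hx hneg
  have hop' : v - rot a ∈ V := by
    have := hg.edgeConvex (v - a) a x h.isSide_sub.1.toIsTriangle hx
      (by rwa [sub_sub_eq_add_sub, add_sub_right_comm, map_add, cross_self, add_zero])
    rwa [sub_add_cancel] at this
  obtain ⟨q, hq⟩ := h.hasSlope.toIsTriangle.exists_hasSlope_opposite hop g
  have hq₁ := h.isSide.opposite_of_opposite h.isSide_sub hg hq
  have hq₃ := hasSlope_neg_iff.1 hq
  rw [sub_add_cancel] at hq₁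
  refine ⟨q, fun b hb => ?_⟩
  rcases TriLattice.mem_halfTurn.1 hb with rfl | rfl | rfl
  · exact hq₁
  · rw [map_neg]
    refine ⟨⟨neg_mem_dirs (rot_mem_dirs h.dir), h.hasSlope.base, ?_, ?_⟩, ?_, ?_⟩
    · rwa [← sub_eq_add_neg]
    · simpa [← add_sub_assoc] using hop
    · simpa using hq₁.slope_apex
    · simpa using hq₃.slope_tip
  · simpa [neg_add_eq_sub] using hq₃

end IsSideVertex

/-! ### The spread of a grid-concave function -/

/-- The integers, as an additive subgroup of the reals. -/
def ints : AddSubgroup ℝ := (Int.castAddHom ℝ).range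

lemma mem_ints_iff {x : ℝ} : x ∈ ints ↔ ∃ z : ℤ, x = z :=
  ⟨fun ⟨z, hz⟩ => ⟨z, hz.symm⟩, fun ⟨z, hz⟩ => ⟨z, hz.symm⟩⟩

/-- The number of edges in the side with direction `u` of the flatspace with slope `p`. -/
def sideLength (V : Finset LPt) (g : LPt → ℝ) (p : ℝ × ℝ) (u : LPt) : ℕ :=
  #{v ∈ V | IsSide V g p v u}

/-- The length of the side with direction `u` of the flatspace with slope `p`, counted only if the
increments of `g` along this side are not integral. -/
def freeLength (V : Finset LPt) (g : LPt → ℝ) (p : ℝ × ℝ) (u : LPt) : ℝ :=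
  if lin p u ∈ ints then 0 else sideLength V g p u

/-- Half of the total free length of the sides of the flatspace with slope `p`. -/
def halfPerimeter (V : Finset LPt) (g : LPt → ℝ) (p : ℝ × ℝ) : ℝ :=
  (∑ u ∈ dirs, freeLength V g p u) / 2

/-- The contribution of the flatspace with slope `p` to the spread at its vertex `v`: half the free
perimeter in the interior, the free length of the side inside a side, zero at the corners. -/
def spreadAt (V : Finset LPt) (g : LPt → ℝ) (p : ℝ × ℝ) (v : LPt) : ℝ :=
  if IsInteriorVertex V g p v then halfPerimeter V g p
  else ∑ u ∈ dirs with IsSideVertex V g p v u, freeLength V g p u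

lemma freeLength_nonneg (V : Finset LPt) (g : LPt → ℝ) (p : ℝ × ℝ) (u : LPt) :
    0 ≤ freeLength V g p u := by
  unfold freeLength; split_ifs <;> positivity

lemma halfPerimeter_nonneg (V : Finset LPt) (g : LPt → ℝ) (p : ℝ × ℝ) :
    0 ≤ halfPerimeter V g p :=
  div_nonneg (Finset.sum_nonneg fun _ _ => freeLength_nonneg ..) zero_le_two

lemma sum_dirs {M : Type*} [AddCommMonoid M] (hu : u ∈ dirs) (f : LPt → M) :
    ∑ b ∈ dirs, f b =
      f u + (f (rot u) + (f (rot u - u) + (f (-u) + (f (-rot u) + f (u - rot u))))) := by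
  rw [dirs_eq hu]
  rcases mem_dirs.1 hu with rfl | rfl | rfl | rfl | rfl | rfl <;> simp [rot_apply]

lemma two_mul_halfPerimeter (hu : u ∈ dirs) : 2 * halfPerimeter V g p =
    freeLength V g p u + freeLength V g p (rot u) + freeLength V g p (rot u - u) +
      freeLength V g p (-u) + freeLength V g p (-rot u) + freeLength V g p (u - rot u) := by
  rw [halfPerimeter, sum_dirs hu]; ring

namespace IsSide

lemma sideLength_le_opposite (h : IsSide V g p v a) (hg : GridConcave V g)
    (hq : HasSlope V g q (v + a) (-a)) : sideLength V g p a ≤ sideLength V g q (-a) := by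
  refine Finset.card_le_card_of_injOn (· + a) (fun x hx => ?_) (add_left_injective a).injOn
  simp only [Finset.coe_filter, Set.mem_ofPred_eq] at hx ⊢
  have hxq := h.opposite_of_opposite hx.2 hg hq
  exact ⟨hxq.base, hx.2.opposite hxq⟩

lemma freeLength_opposite (h : IsSide V g p v a) (hg : GridConcave V g)
    (hq : HasSlope V g q (v + a) (-a)) : freeLength V g q (-a) = freeLength V g p a := by
  have hle := (h.opposite hq).sideLength_le_opposite hg (q := p) (by simpa using h.1)
  rw [neg_neg] at hle
  rw [freeLength, freeLength, le_antisymm (h.sideLength_le_opposite hg hq) hle, map_neg,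
    neg_mem_iff, h.1.lin_eq hq]

end IsSide

namespace IsSideVertex

lemma opposite (h : IsSideVertex V g p v a) (hg : GridConcave V g) (hb : HasSlope V g q v b)
    (hpq : p ≠ q) : IsSideVertex V g q v (-a) ∧ freeLength V g q (-a) = freeLength V g p a := by
  have hb' : b ∉ halfTurn a := fun hmem => hpq (((h b).2 hmem).unique hb)
  have hmem : b ∈ halfTurn (-a) := by
    have := hb.dir
    rw [dirs_eq h.dir] at this
    simp only [halfTurn, map_neg, Finset.mem_insert, Finset.mem_singleton, neg_sub_neg] at *
    tauto
  obtain ⟨x, hx, hneg⟩ : ∃ x ∈ V, cross a (x - v) < 0 := by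
    by_contra! hall
    refine hb' ((mem_halfTurn_iff_cross h.dir hb.dir).2 ⟨?_, ?_⟩)
    · simpa using hall _ hb.tip
    · simpa using hall _ hb.apex
  obtain ⟨q', hq'⟩ := h.exists_opposite hg hx hneg
  obtain rfl : q = q' := hb.unique (hq' b hmem)
  refine ⟨fun c => ⟨fun hc => ?_, hq' c⟩, ?_⟩
  · have hc' : c ∉ halfTurn a := fun hmem => hpq (((h c).2 hmem).unique hc)
    have := hc.dir
    rw [dirs_eq h.dir] at this
    simp only [halfTurn, map_neg, Finset.mem_insert, Finset.mem_singleton, neg_sub_neg] at *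
    tauto
  · refine h.isSide.freeLength_opposite hg (hasSlope_neg_iff.2 (hq' _ ?_))
    simp [halfTurn, neg_add_eq_sub]

lemma not_isInteriorVertex (h : IsSideVertex V g p v u) : ¬ IsInteriorVertex V g p v :=
  fun hF => neg_notMem_halfTurn h.dir ((h _).1 (hF _ (neg_mem_dirs h.dir)))

end IsSideVertex

lemma IsInteriorVertex.spreadAt_eq (h : IsInteriorVertex V g p v) :
    spreadAt V g p v = halfPerimeter V g p := if_pos h

lemma IsSideVertex.spreadAt_eq (h : IsSideVertex V g p v u) :
    spreadAt V g p v = freeLength V g p u := by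
  have : ({b ∈ dirs | IsSideVertex V g p v b} : Finset LPt) = {u} := by
    ext b
    simp only [Finset.mem_filter, Finset.mem_singleton]
    constructor
    · exact fun hb => hb.2.eq h.dir fun c => (h c).1
    · rintro rfl
      exact ⟨h.dir, h⟩
  rw [spreadAt, if_neg h.not_isInteriorVertex, this, Finset.sum_singleton]

lemma spreadAt_eq_zero (h : ¬ IsInteriorVertex V g p v) (h' : ∀ u, ¬ IsSideVertex V g p v u) :
    spreadAt V g p v = 0 := by
  simp [spreadAt, h, h']

lemma spreadAt_nonneg (V : Finset LPt) (g : LPt → ℝ) (p : ℝ × ℝ) (v : LPt) :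
    0 ≤ spreadAt V g p v := by
  unfold spreadAt
  split_ifs
  exacts [halfPerimeter_nonneg .., Finset.sum_nonneg fun _ _ => freeLength_nonneg ..]

lemma spreadAt_le_freeLength (ha : a ∈ dirs)
    (hslot : ∀ b, HasSlope V g p v b → b ∈ halfTurn a) : spreadAt V g p v ≤ freeLength V g p a := by
  by_cases hside : ∃ u, IsSideVertex V g p v u
  · obtain ⟨u, hu⟩ := hside
    rw [hu.spreadAt_eq, hu.eq ha hslot]
  · rw [spreadAt_eq_zero _ (not_exists.1 hside)]
    · exact freeLength_nonneg ..
    · exact fun hF => neg_notMem_halfTurn ha (hslot _ (hF _ (neg_mem_dirs ha)))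

lemma IsSide.spreadAt_le (h : IsSide V g p v a) (hg : GridConcave V g) :
    spreadAt V g p v ≤ freeLength V g p a :=
  spreadAt_le_freeLength h.1.dir fun _ hb => h.mem_halfTurn hg hb

lemma IsSide.spreadAt_tip_le (h : IsSide V g p v a) (hg : GridConcave V g) :
    spreadAt V g p (v + a) ≤ freeLength V g p a :=
  spreadAt_le_freeLength h.1.dir fun _ hb => h.mem_halfTurn_tip hg hb

lemma IsSide.spreadAt_eq_zero (h : IsSide V g p v a) (hg : GridConcave V g)
    (h' : IsSide V g p (v + rot a) (-rot a)) : spreadAt V g p v = 0 := by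
  have hn := h.1.isSide_rot_iff.1 h'
  refine TriLattice.spreadAt_eq_zero (fun hF => hn (hF _ (rot_mem_dirs h.1.dir))) fun u hu => hn ?_
  rw [← hu.eq h.1.dir fun _ => h.mem_halfTurn hg]
  exact hu.hasSlope_rot

lemma GridConcave.spreadAt_eq (hg : GridConcave V g) (ha : HasSlope V g p v a)
    (hb : HasSlope V g q v b) : spreadAt V g p v = spreadAt V g q v := by
  rcases eq_or_ne p q with rfl | hpq
  · rfl
  by_cases hside : ∃ u, IsSideVertex V g p v u
  · obtain ⟨u, hu⟩ := hside
    obtain ⟨hu', hlen⟩ := hu.opposite hg hb hpq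
    rw [hu.spreadAt_eq, hu'.spreadAt_eq, hlen]
  by_cases hside' : ∃ u, IsSideVertex V g q v u
  · obtain ⟨u, hu⟩ := hside'
    exact absurd ⟨_, (hu.opposite hg ha hpq.symm).1⟩ hside
  rw [spreadAt_eq_zero _ (not_exists.1 hside), spreadAt_eq_zero _ (not_exists.1 hside')]
  · exact fun hF => hpq (ha.unique (hF a ha.dir))
  · exact fun hF => hpq ((hF b hb.dir).unique hb)

end Flatspaces

/-! ### The spread is a feasible direction -/

section Balance

variable {V : Finset LPt} {g : LPt → ℝ} {p : ℝ × ℝ} {v u : LPt}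

lemma card_hasSlope_le (V : Finset LPt) (g : LPt → ℝ) (p : ℝ × ℝ) (u : LPt) :
    #{v ∈ V | HasSlope V g p v u} ≤ #{v ∈ V | HasSlope V g p v (rot u - u)} := by
  refine card_le_card_of_injOn (· + u) (fun x hx => ?_) (add_left_injective u).injOn
  simp only [coe_filter, Set.mem_ofPred_eq] at hx ⊢
  exact ⟨hx.2.tip, hx.2.rotate⟩

lemma card_hasSlope_rot (V : Finset LPt) (g : LPt → ℝ) (p : ℝ × ℝ) (u : LPt) :
    #{v ∈ V | HasSlope V g p v u} = #{v ∈ V | HasSlope V g p v (rot u - u)} := by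
  refine (card_hasSlope_le V g p u).antisymm ((card_hasSlope_le V g p _).trans ?_)
  simpa using card_hasSlope_le V g p (-rot u)

lemma card_crossing_le (V : Finset LPt) (g : LPt → ℝ) (p : ℝ × ℝ) (u : LPt) :
    #{v ∈ V | HasSlope V g p v u ∧ HasSlope V g p (v + u) (-u)} ≤
      #{v ∈ V | HasSlope V g p v (-u) ∧ HasSlope V g p (v + -u) (- -u)} := by
  refine card_le_card_of_injOn (· + u) (fun x hx => ?_) (add_left_injective u).injOn
  simp only [coe_filter, Set.mem_ofPred_eq, neg_neg, add_neg_cancel_right] at hx ⊢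
  exact ⟨hx.2.1.tip, hx.2.2, hx.2.1⟩

lemma sideLength_sub_sideLength_neg (V : Finset LPt) (g : LPt → ℝ) (p : ℝ × ℝ) (u : LPt) :
    (sideLength V g p u : ℤ) - sideLength V g p (-u) =
      #{v ∈ V | HasSlope V g p v u} - #{v ∈ V | HasSlope V g p v (-u)} := by
  have hsplit (b : LPt) : #{v ∈ V | HasSlope V g p v b ∧ HasSlope V g p (v + b) (-b)} +
      sideLength V g p b = #{v ∈ V | HasSlope V g p v b} := by
    have h := card_filter_add_card_filter_not (s := {v ∈ V | HasSlope V g p v b})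
      fun v => HasSlope V g p (v + b) (-b)
    rw [filter_filter, filter_filter] at h
    unfold sideLength IsSide
    convert h
  have hcross := (card_crossing_le V g p u).antisymm (by simpa using card_crossing_le V g p (-u))
  have hu := hsplit u
  have hu' := hsplit (-u)
  omega

/-- Both sides count the little triangles of either orientation in the flatspace: the inner edges
are shared by one triangle of each orientation. -/
lemma sideLength_balance (V : Finset LPt) (g : LPt → ℝ) (p : ℝ × ℝ) (u : LPt) :
    (sideLength V g p u : ℝ) - sideLength V g p (-u) =
      sideLength V g p (rot u - u) - sideLength V g p (u - rot u) := by
  have hu := sideLength_sub_sideLength_neg V g p u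
  have hr := sideLength_sub_sideLength_neg V g p (rot u - u)
  rw [neg_sub, ← card_hasSlope_rot V g p u] at hr
  have hneg := card_hasSlope_rot V g p (-u)
  rw [map_neg, neg_sub_neg] at hneg
  rw [← hneg, ← hu] at hr
  exact_mod_cast hr.symm

lemma two_mul_halfPerimeter_eq (hu : u ∈ dirs) : 2 * halfPerimeter V g p =
    (if lin p u ∈ ints then 0 else (sideLength V g p u + sideLength V g p (-u) : ℝ)) +
    (if lin p (rot u) ∈ ints then 0
      else (sideLength V g p (rot u) + sideLength V g p (-rot u) : ℝ)) +
    (if lin p (rot u) - lin p u ∈ ints then 0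
      else (sideLength V g p (rot u - u) + sideLength V g p (u - rot u) : ℝ)) := by
  rw [two_mul_halfPerimeter hu]
  simp only [freeLength, map_neg, map_sub, neg_mem_iff,
    sub_mem_comm_iff (a := lin p u) (b := lin p (rot u))]
  split_ifs <;> ring

lemma freeLength_add_le_halfPerimeter (hu : u ∈ dirs) (V : Finset LPt) (g : LPt → ℝ) (p : ℝ × ℝ) :
    freeLength V g p u + freeLength V g p (rot u) ≤ halfPerimeter V g p := by
  have hC := two_mul_halfPerimeter_eq (V := V) (g := g) (p := p) hu
  have h₁ := sideLength_balance V g p u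
  have h₂ := sideLength_balance V g p (-rot u)
  simp only [map_neg, rot_rot, neg_neg, neg_sub_neg, sub_sub_cancel, sub_sub_cancel_left] at h₂
  unfold freeLength
  by_cases hp : lin p u ∈ ints <;> by_cases hq : lin p (rot u) ∈ ints
  · simp only [hp, hq, sub_mem, if_true] at hC ⊢
    linarith
  · have hr : lin p (rot u) - lin p u ∉ ints := fun h => hq (by simpa using add_mem h hp)
    simp only [hp, hq, hr, if_true, if_false] at hC ⊢
    linarith [(sideLength V g p (rot u - u)).cast_nonneg (α := ℝ),
      (sideLength V g p (u - rot u)).cast_nonneg (α := ℝ)]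
  · have hr : lin p (rot u) - lin p u ∉ ints := fun h => hp (by simpa using sub_mem hq h)
    simp only [hp, hq, hr, if_true, if_false] at hC ⊢
    linarith
  · simp only [hp, hq, if_false] at hC ⊢
    split_ifs at hC <;> linarith

lemma halfPerimeter_le_of_sideLength_eq_zero (hu : u ∈ dirs)
    (h : sideLength V g p (u - rot u) = 0) :
    halfPerimeter V g p ≤ freeLength V g p u + freeLength V g p (-rot u) := by
  have hC := two_mul_halfPerimeter_eq (V := V) (g := g) (p := p) hu
  have h₁ := sideLength_balance V g p u
  have h₂ := sideLength_balance V g p (-rot u)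
  simp only [map_neg, rot_rot, neg_neg, neg_sub_neg, sub_sub_cancel, sub_sub_cancel_left] at h₂
  simp only [h, Nat.cast_zero, sub_zero, add_zero] at h₁ hC
  simp only [freeLength, map_neg, neg_mem_iff]
  by_cases hp : lin p u ∈ ints <;> by_cases hq : lin p (rot u) ∈ ints
  · simp only [hp, hq, sub_mem, if_true] at hC ⊢
    linarith
  · have hr : lin p (rot u) - lin p u ∉ ints := fun h => hq (by simpa using add_mem h hp)
    simp only [hp, hq, hr, if_true, if_false] at hC ⊢
    linarith
  · have hr : lin p (rot u) - lin p u ∉ ints := fun h => hp (by simpa using sub_mem hq h)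
    simp only [hp, hq, hr, if_true, if_false] at hC ⊢
    linarith
  · simp only [hp, hq, if_false] at hC ⊢
    split_ifs at hC <;> linarith

lemma IsSide.freeLength_pos (h : IsSide V g p v u) (hn : lin p u ∉ ints) :
    0 < freeLength V g p u := by
  rw [freeLength, if_neg hn, Nat.cast_pos, sideLength, card_pos]
  exact ⟨v, mem_filter.2 ⟨h.1.base, h⟩⟩

lemma freeLength_le_halfPerimeter (hu : u ∈ dirs) (V : Finset LPt) (g : LPt → ℝ) (p : ℝ × ℝ) :
    freeLength V g p u ≤ halfPerimeter V g p := by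
  linarith [freeLength_add_le_halfPerimeter hu V g p, freeLength_nonneg V g p (rot u)]

end Balance

section Feasible

variable {V : Finset LPt} {g : LPt → ℝ} {p q : ℝ × ℝ} {v u a b : LPt}

lemma spreadAt_le_halfPerimeter (V : Finset LPt) (g : LPt → ℝ) (p : ℝ × ℝ) (v : LPt) :
    spreadAt V g p v ≤ halfPerimeter V g p := by
  by_cases hint : IsInteriorVertex V g p v
  · exact hint.spreadAt_eq.le
  by_cases hside : ∃ u, IsSideVertex V g p v u
  · obtain ⟨u, hu⟩ := hside
    exact hu.spreadAt_eq.trans_le (freeLength_le_halfPerimeter hu.dir ..)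
  · rw [spreadAt_eq_zero hint (not_exists.1 hside)]
    exact halfPerimeter_nonneg ..

lemma IsSide.sideLength_sub_rot_eq_zero (h : IsSide V g p v u) (hg : GridConcave V g)
    (h' : IsSide V g p (v + rot u) (-rot u)) : sideLength V g p (u - rot u) = 0 := by
  rw [sideLength, card_eq_zero, filter_eq_empty_iff]
  intro x _ hx
  have h₁ := h.cross_nonneg hg hx.1.rotate
  have h₂ := h'.cross_nonneg hg hx.1
  have h₃ := hx.cross_nonneg hg h.1
  have hrot := cross_rot h.1.dir
  simp only [map_add, map_sub, map_neg, AddMonoidHom.sub_apply, AddMonoidHom.neg_apply,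
    cross_self] at h₁ h₂ h₃
  omega

/-- What the spread loses, against the half perimeter, at an end of the edge `v, v + u` if this edge
lies on a side. -/
def sideLoss (V : Finset LPt) (g : LPt → ℝ) (p : ℝ × ℝ) (v u : LPt) : ℝ :=
  if IsSide V g p v u then halfPerimeter V g p - freeLength V g p u else 0

/-- The vertex `v` is where the two sides of the triangle in the direction `u` and `-rot u` meet. -/
lemma HasSlope.spreadAt_le (h : HasSlope V g p v u) (hg : GridConcave V g) :
    spreadAt V g p v ≤ halfPerimeter V g p - sideLoss V g p v u -
      sideLoss V g p (v + rot u) (-rot u) := by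
  unfold sideLoss
  split_ifs with h₁ h₂ h₂
  · rw [h₁.spreadAt_eq_zero hg h₂]
    linarith [halfPerimeter_le_of_sideLength_eq_zero h.dir (h₁.sideLength_sub_rot_eq_zero hg h₂)]
  · linarith [h₁.spreadAt_le hg]
  · have := h₂.spreadAt_tip_le hg
    rw [add_neg_cancel_right] at this
    linarith
  · linarith [spreadAt_le_halfPerimeter V g p v]

lemma HasSlope.isInteriorVertex (h : HasSlope V g p v u) (h₁ : HasSlope V g p v (rot u))
    (h₂ : HasSlope V g p v (-rot u)) (h₃ : HasSlope V g p v (u - rot u)) (hg : GridConcave V g) :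
    IsInteriorVertex V g p v := by
  have hrot : HasSlope V g p v (rot u - u) := by
    by_contra hn
    rw [← rot_rot] at hn
    have := (h₁.isSide_rot_iff.2 hn).mem_halfTurn_tip hg (b := -rot u)
      (by simpa [add_assoc] using h₂)
    rw [rot_rot, neg_sub] at this
    exact sub_rot_notMem_halfTurn (sub_rot_mem_dirs h.dir) (by simpa using this)
  have hneg : HasSlope V g p v (-u) := by
    by_contra hn
    have hside : IsSide V g p v (-rot u) := isSide_iff.2 ⟨h₂, by simpa [neg_sub_left] using hn⟩
    have := hside.mem_halfTurn hg h₁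
    exact neg_notMem_halfTurn h₂.dir (by simpa using this)
  intro b hb
  rw [dirs_eq h.dir] at hb
  simp only [mem_insert, mem_singleton] at hb
  rcases hb with rfl | rfl | rfl | rfl | rfl | rfl <;> assumption

lemma HasSlope.le_spreadAt (h : HasSlope V g p v u) (h' : HasSlope V g p v (u - rot u))
    (hg : GridConcave V g) :
    halfPerimeter V g p - sideLoss V g p (v + rot u) (-rot u) - sideLoss V g p v (u - rot u) ≤
      spreadAt V g p v := by
  have hrot := h.isSide_rot_iff
  have hsub : IsSide V g p v (u - rot u) ↔ ¬ HasSlope V g p v (-rot u) := by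
    rw [isSide_iff, map_sub, rot_rot]
    simp [h']
  unfold sideLoss
  split_ifs with h₁ h₂ h₂
  · have := freeLength_add_le_halfPerimeter (neg_mem_dirs (rot_mem_dirs h.dir)) V g p
    rw [map_neg, rot_rot, neg_sub] at this
    linarith [spreadAt_nonneg V g p v]
  · have hv : IsSideVertex V g p v (-rot u) := fun b => by
      refine ⟨fun hb => h₁.mem_halfTurn_tip hg (by simpa using hb), fun hb => ?_⟩
      simp only [mem_halfTurn, map_neg, rot_rot, neg_sub, sub_neg_eq_add, sub_add_cancel] at hb
      rcases hb with rfl | rfl | rfl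
      exacts [not_not.1 (hsub.not.1 h₂), h', h]
    linarith [hv.spreadAt_eq]
  · have hv : IsSideVertex V g p v (u - rot u) := fun b => by
      refine ⟨h₂.mem_halfTurn hg, fun hb => ?_⟩
      simp only [mem_halfTurn, map_sub, rot_rot, sub_sub_cancel] at hb
      rcases hb with rfl | rfl | rfl
      exacts [h', h, not_not.1 (hrot.not.1 h₁)]
    linarith [hv.spreadAt_eq]
  · rw [(h.isInteriorVertex (not_not.1 (hrot.not.1 h₁)) (not_not.1 (hsub.not.1 h₂)) h'
      hg).spreadAt_eq]
    linarith

/-- The losses in the sides of the rhombus cancel: every side is charged once at an acute and once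
at an obtuse corner. -/
lemma GridConcave.slack_spreadAt_nonneg (hg : GridConcave V g) (h : HasSlope V g p v u)
    (h' : HasSlope V g p (v + u) (-u)) : 0 ≤ slack (spreadAt V g p) v u := by
  have hv := h.le_spreadAt (hasSlope_neg_iff.1 h') hg
  have hv' := h'.le_spreadAt (hasSlope_neg_iff.1 (by simpa using h)) hg
  have ha := h.rotate_twice.spreadAt_le hg
  have ha' := h'.rotate_twice.spreadAt_le hg
  have hbase : v + u - rot u + (rot u - u) = v := by abel
  simp only [map_neg, rot_rot, neg_neg, neg_sub, neg_sub_neg, add_add_sub_cancel,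
    ← sub_eq_add_neg, hbase] at hv' ha ha'
  unfold slack
  linarith

/-- The common edge `v, v + u` of two little triangles of `V` is not a bend of `g`. -/
structure IsTight (V : Finset LPt) (g : LPt → ℝ) (v u : LPt) : Prop where
  left : IsTriangle V v u
  right : IsTriangle V (v + u) (-u)
  slack_eq_zero : slack g v u = 0

lemma HasSlope.isTight_iff (h : HasSlope V g p v u) :
    IsTight V g v u ↔ HasSlope V g p (v + u) (-u) :=
  ⟨fun ht => h.opposite ht.right.opposite_apex ht.slack_eq_zero,
    fun h' => ⟨h.toIsTriangle, h'.toIsTriangle, by rw [h.slack_eq h', sub_self]⟩⟩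

lemma HasSlope.isSide_iff_not_isTight (h : HasSlope V g p v u) :
    IsSide V g p v u ↔ ¬ IsTight V g v u := by
  rw [IsSide, h.isTight_iff, and_iff_right h]

/-- A feasible direction at `g` in the cone of grid-concave functions, nonnegative and vanishing
where `g` is integral; see `spreadAt`, where the choice of the slope does not matter. -/
def spread (V : Finset LPt) (g : LPt → ℝ) (v : LPt) : ℝ :=
  if h : ∃ p u, HasSlope V g p v u then spreadAt V g h.choose v else 0

lemma GridConcave.spread_eq (hg : GridConcave V g) (h : HasSlope V g p v u) :
    spread V g v = spreadAt V g p v := by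
  have hex : ∃ p u, HasSlope V g p v u := ⟨p, u, h⟩
  obtain ⟨u', h'⟩ := hex.choose_spec
  rw [spread, dif_pos hex, hg.spreadAt_eq h' h]

lemma spread_nonneg (V : Finset LPt) (g : LPt → ℝ) (v : LPt) : 0 ≤ spread V g v := by
  unfold spread
  split_ifs
  exacts [spreadAt_nonneg .., le_rfl]

lemma spread_eq_zero_of_notMem (hv : v ∉ V) : spread V g v = 0 :=
  dif_neg fun ⟨_, _, h⟩ => hv h.base

lemma IsTight.slack_spread_nonneg (h : IsTight V g v u) (hg : GridConcave V g) :
    0 ≤ slack (spread V g) v u := by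
  obtain ⟨p, hp⟩ := h.left.exists_hasSlope g
  have hp' := hp.isTight_iff.1 h
  have hopp := hp'.rotate_twice
  rw [map_neg, neg_neg, ← sub_eq_add_neg] at hopp
  have := hg.slack_spreadAt_nonneg hp hp'
  rwa [slack, ← hg.spread_eq hp, ← hg.spread_eq hp', ← hg.spread_eq hp.rotate_twice,
    ← hg.spread_eq hopp] at this

lemma IsTriangle.spread_tip_eq (h : IsTriangle V v u) (hg : GridConcave V g)
    (hn : ¬ IsTight V g v u) (hi : g (v + u) - g v ∈ ints) : spread V g (v + u) = spread V g v := by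
  obtain ⟨p, hp⟩ := h.exists_hasSlope g
  have hside := hp.isSide_iff_not_isTight.2 hn
  have h₀ : freeLength V g p u = 0 := if_pos (hp.slope_tip ▸ hi)
  rw [hg.spread_eq hp, hg.spread_eq hp.rotate]
  linarith [hside.spreadAt_le hg, hside.spreadAt_tip_le hg, spreadAt_nonneg V g p v,
    spreadAt_nonneg V g p (v + u)]

lemma lin_mem_ints (hu : u ∈ dirs) (h₁ : lin p u ∈ ints) (h₂ : lin p (rot u) ∈ ints) (a : LPt) :
    lin p a ∈ ints := by
  rw [lin_eq_cross hu p a, ← zsmul_eq_mul, ← zsmul_eq_mul]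
  exact add_mem (zsmul_mem h₁ _) (zsmul_mem h₂ _)

lemma IsTriangle.spread_eq_zero (h : IsTriangle V v u) (hg : GridConcave V g)
    (hi : g (v + u) - g v ∈ ints) (hi' : g (v + rot u) - g v ∈ ints) : spread V g v = 0 := by
  obtain ⟨p, hp⟩ := h.exists_hasSlope g
  rw [hp.slope_tip] at hi
  rw [hp.slope_apex] at hi'
  have h₀ : halfPerimeter V g p = 0 := by
    rw [halfPerimeter, sum_eq_zero, zero_div]
    exact fun a _ => if_pos (lin_mem_ints h.dir hi hi' a)
  rw [hg.spread_eq hp]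
  exact ((spreadAt_le_halfPerimeter ..).trans_eq h₀).antisymm (spreadAt_nonneg ..)

lemma spread_eq_zero_of_forall_toLex_le {v₀ : LPt} (h₀ : ∀ x ∈ V, toLex x ≤ toLex v₀) :
    spread V g v₀ = 0 := by
  have hcorner {u : LPt} (hu : u ∈ dirs) (h : v₀ + u ∈ V) (h' : v₀ + -u ∈ V) : False := by
    have h₁ := h₀ _ h
    have h₂ := h₀ _ h'
    rw [toLex_add, add_le_iff_nonpos_right] at h₁ h₂
    rw [toLex_neg, neg_nonpos] at h₂
    have hzero : u = 0 := toLex.injective (h₁.antisymm h₂)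
    simp [hzero, mem_dirs, Prod.ext_iff] at hu
  unfold spread
  split_ifs with h
  · obtain ⟨u, hu⟩ := h.choose_spec
    refine spreadAt_eq_zero (fun hF => ?_) fun a ha => hcorner ha.dir ha.hasSlope.tip ?_
    · exact hcorner hu.dir (hF _ hu.dir).tip (hF _ (neg_mem_dirs hu.dir)).tip
    · simpa using ha.hasSlope_rot_sub.apex
  · rfl

/-- A grid-concave function that cannot be increased along its spread. -/
structure IsTaut (V : Finset LPt) (g : LPt → ℝ) : Prop extends GridConcave V g where
  spread_eq_zero (v : LPt) : spread V g v = 0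

lemma exists_notMem_ints (hu : u ∈ dirs) (h : ¬ (lin p u ∈ ints ∧ lin p (rot u) ∈ ints)) :
    ∃ a ∈ dirs, lin p a ∉ ints ∧ lin p (rot a) ∉ ints := by
  by_cases h₁ : lin p u ∈ ints
  · have h₂ : lin p (rot u) ∉ ints := fun h₂ => h ⟨h₁, h₂⟩
    refine ⟨rot u, rot_mem_dirs hu, h₂, fun h₃ => h₂ ?_⟩
    rw [rot_rot, map_sub] at h₃
    simpa using add_mem h₃ h₁
  by_cases h₂ : lin p (rot u) ∈ ints
  · refine ⟨rot u - u, rot_sub_mem_dirs hu, fun h₃ => h₁ ?_, ?_⟩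
    · rw [map_sub] at h₃
      simpa using sub_mem h₂ h₃
    · simpa using h₁
  · exact ⟨u, hu, h₁, h₂⟩

lemma exists_isSide (h : HasSlope V g p v u) :
    ∃ x, IsSide V g p x u ∨ IsSide V g p x (rot u) := by
  by_contra! hno
  have hne : ({x ∈ V | HasSlope V g p x u} : Finset LPt).Nonempty :=
    ⟨v, mem_filter.2 ⟨h.base, h⟩⟩
  obtain ⟨x, hx, hmin⟩ := exists_min_image _ (fun x => cross (rot u) x) hne
  have hx := (mem_filter.1 hx).2
  have hcross₁ : HasSlope V g p (x + u - rot u) (rot u) := by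
    have := hasSlope_neg_iff.1 (not_not.1 fun hn => (hno x).1 ⟨hx, hn⟩)
    simpa [add_sub_assoc] using this.rotate
  have hcross₂ : HasSlope V g p (x + u - rot u) u := by
    have := hasSlope_neg_iff.1 (not_not.1 fun hn => (hno _).2 ⟨hcross₁, hn⟩)
    simpa using this
  have hle := hmin _ (mem_filter.2 ⟨hcross₂.base, hcross₂⟩)
  have hrot := cross_rot (rot_mem_dirs hx.dir)
  simp only [map_add, map_sub, rot_rot, cross_self] at hle hrot
  omega

lemma IsInteriorVertex.halfPerimeter_pos (h : IsInteriorVertex V g p v) (hu : u ∈ dirs)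
    (hn : lin p u ∉ ints) : 0 < halfPerimeter V g p := by
  obtain ⟨a, ha, h₁, h₂⟩ := exists_notMem_ints hu fun hi => hn hi.1
  have hle := freeLength_add_le_halfPerimeter ha V g p
  obtain ⟨x, hx | hx⟩ := exists_isSide (h a ha)
  · linarith [hx.freeLength_pos h₁, freeLength_nonneg V g p (rot a)]
  · linarith [hx.freeLength_pos h₂, freeLength_nonneg V g p a]

/-- Three consecutive slots at a vertex make it interior to its flatspace or to a side in the
direction `u`. -/
lemma IsTaut.lin_mem_ints (hg : IsTaut V g) (h₁ : HasSlope V g p v u)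
    (h₂ : HasSlope V g p v (rot u)) (h₃ : HasSlope V g p v (rot u - u)) : lin p u ∈ ints := by
  by_contra hn
  have h₀ := hg.spread_eq_zero v
  rw [hg.spread_eq h₁] at h₀
  by_cases h₄ : HasSlope V g p v (u - rot u)
  · have hint : IsInteriorVertex V g p v := h₂.isInteriorVertex (by simpa using h₃)
      (by simpa using h₄) (by simpa using h₁) hg.toGridConcave
    rw [hint.spreadAt_eq] at h₀
    exact (hint.halfPerimeter_pos h₁.dir hn).ne' h₀
  · have hside := isSide_iff.2 ⟨h₁, h₄⟩
    have hv : IsSideVertex V g p v u := fun b => by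
      refine ⟨hside.mem_halfTurn hg.toGridConcave, fun hb => ?_⟩
      rcases mem_halfTurn.1 hb with rfl | rfl | rfl <;> assumption
    rw [hv.spreadAt_eq] at h₀
    exact (hside.freeLength_pos hn).ne' h₀

end Feasible

/-! ### Counting the edges of fractional triangles -/

/-- The little triangle based at `v, v + u` is one on which `g` is not integral. -/
def IsFractional (V : Finset LPt) (g : LPt → ℝ) (v u : LPt) : Prop :=
  ∃ p, HasSlope V g p v u ∧ ¬ ∀ a, lin p a ∈ ints

/-- The edge `v, v + u` has an integral increment, which has to be kept because the edge is a bend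
or a boundary edge. -/
def IsFixed (V : Finset LPt) (g : LPt → ℝ) (v u : LPt) : Prop :=
  g (v + u) - g v ∈ ints ∧ ¬ IsTight V g v u

/-- The little triangle based at `v, v + u` is fractional and none of its edges is fixed. -/
structure IsFree (V : Finset LPt) (g : LPt → ℝ) (v u : LPt) : Prop where
  isFractional : IsFractional V g v u
  not_isFixed : ¬ IsFixed V g v u
  not_isFixed_rotate : ¬ IsFixed V g (v + u) (rot u - u)
  not_isFixed_rotate_twice : ¬ IsFixed V g (v + rot u) (-rot u)

/-- The edge `v, v + u` takes up a degree of freedom of the little triangle based at it. -/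
def IsStiff (V : Finset LPt) (g : LPt → ℝ) (v u : LPt) : Prop :=
  IsFixed V g v u ∨ IsFree V g v u ∧ IsTight V g v u

section Stiff

variable {V : Finset LPt} {g : LPt → ℝ} {p : ℝ × ℝ} {v u : LPt}

lemma IsTight.neg (h : IsTight V g v u) : IsTight V g (v + u) (-u) := by
  refine ⟨h.right, by simpa using h.left, ?_⟩
  have hs := h.slack_eq_zero
  rw [slack, map_neg, add_neg_cancel_right, sub_neg_eq_add, ← sub_eq_add_neg]
  rw [slack] at hs
  linarith

lemma isTight_neg_iff : IsTight V g (v + u) (-u) ↔ IsTight V g v u :=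
  ⟨fun h => by simpa using h.neg, IsTight.neg⟩

lemma isFixed_neg_iff : IsFixed V g (v + u) (-u) ↔ IsFixed V g v u := by
  rw [IsFixed, IsFixed, isTight_neg_iff, add_neg_cancel_right, sub_mem_comm_iff]

lemma HasSlope.isFixed_iff (h : HasSlope V g p v u) :
    IsFixed V g v u ↔ lin p u ∈ ints ∧ ¬ HasSlope V g p v (u - rot u) := by
  rw [IsFixed, h.slope_tip, h.isTight_iff, hasSlope_neg_iff]

lemma IsFractional.isTriangle (h : IsFractional V g v u) : IsTriangle V v u :=
  h.choose_spec.1.toIsTriangle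

lemma IsFractional.rotate (h : IsFractional V g v u) : IsFractional V g (v + u) (rot u - u) :=
  h.imp fun _ hp => hp.imp_left HasSlope.rotate

lemma IsFractional.opposite (h : IsFractional V g v u) (ht : IsTight V g v u) :
    IsFractional V g (v + u) (-u) :=
  h.imp fun _ hp => hp.imp_left fun hp' => hp'.isTight_iff.1 ht

lemma IsFree.rotate (h : IsFree V g v u) : IsFree V g (v + u) (rot u - u) where
  isFractional := h.isFractional.rotate
  not_isFixed := h.not_isFixed_rotate
  not_isFixed_rotate := by simpa using h.not_isFixed_rotate_twice
  not_isFixed_rotate_twice := by simpa using h.not_isFixed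

lemma isFree_rotate_twice_iff : IsFree V g (v + rot u) (-rot u) ↔ IsFree V g v u :=
  ⟨fun h => by simpa using h.rotate, fun h => by simpa using h.rotate.rotate⟩

lemma IsTaut.isFixed_parallel (hg : IsTaut V g) (h : IsFractional V g v u)
    (ht : IsTight V g v u) (hi : IsFixed V g (v + rot u) (-rot u)) :
    IsFixed V g (v + u - rot u) (rot u) := by
  obtain ⟨p, hp, hn⟩ := h
  have hop := hp.isTight_iff.1 ht
  have hr : lin p (rot u) ∈ ints := by simpa using (hp.rotate_twice.isFixed_iff.1 hi).1
  have hpar : HasSlope V g p (v + u - rot u) (rot u) := by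
    simpa [← sub_eq_add_neg] using hop.rotate_twice
  rw [hpar.isFixed_iff, ← hasSlope_neg_iff, sub_add_cancel]
  refine ⟨hr, fun hx => hn (TriLattice.lin_mem_ints (rot_mem_dirs hp.dir) hr ?_)⟩
  simpa using hg.lin_mem_ints hp.rotate (by simpa using hop) (by simpa using hx)

lemma IsTaut.isFixed_parallel' (hg : IsTaut V g) (h : IsFractional V g v u)
    (ht : IsTight V g v u) (hi : IsFixed V g (v + u) (rot u - u)) :
    IsFixed V g v (u - rot u) := by
  obtain ⟨p, hp, hn⟩ := h
  have hop := hasSlope_neg_iff.1 (hp.isTight_iff.1 ht)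
  have hr := (hp.rotate.isFixed_iff.1 hi).1
  have hr' : lin p (u - rot u) ∈ ints := by rwa [← neg_sub, map_neg, neg_mem_iff]
  have hpar : u - rot u - rot (u - rot u) = -rot u := by rw [map_sub, rot_rot]; abel
  rw [hop.isFixed_iff, hpar]
  refine ⟨hr', fun hx => hn (TriLattice.lin_mem_ints (rot_mem_dirs hp.dir) ?_ (by simpa using hr))⟩
  simpa using hg.lin_mem_ints hx (by simpa [neg_add_eq_sub] using hop) (by simpa using hp)

lemma IsTaut.isFree_opposite (hg : IsTaut V g) (h : IsFree V g v u) (ht : IsTight V g v u) :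
    IsFree V g (v + u) (-u) := by
  have hop := h.isFractional.opposite ht
  refine ⟨hop, isFixed_neg_iff.not.2 h.not_isFixed, fun hx => h.not_isFixed_rotate ?_,
    fun hx => h.not_isFixed_rotate_twice ?_⟩
  · simpa [neg_add_eq_sub] using hg.isFixed_parallel' hop ht.neg hx
  · simpa using hg.isFixed_parallel hop ht.neg hx

lemma IsTaut.not_isTight_rotate_twice (hg : IsTaut V g) (h : IsFree V g v u)
    (ht : IsTight V g v u) : ¬ IsTight V g (v + rot u) (-rot u) := by
  intro ht'
  obtain ⟨p, hp, hn⟩ := h.isFractional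
  have hop := hp.isTight_iff.1 ht
  have hop' : HasSlope V g p v (rot u) := by simpa using hp.rotate_twice.isTight_iff.1 ht'
  have hr : lin p (u - rot u) ∈ ints := hg.lin_mem_ints (hasSlope_neg_iff.1 hop)
    (by simpa using hp) (by simpa using hop')
  rw [← neg_sub, map_neg, neg_mem_iff] at hr
  have hside : HasSlope V g p (v + u) (rot u) := by
    by_contra hx
    exact h.not_isFixed_rotate (hp.rotate.isFixed_iff.2 ⟨hr, by simpa using hx⟩)
  refine hn (TriLattice.lin_mem_ints (rot_mem_dirs hp.dir) ?_ (by simpa using hr))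
  exact hg.lin_mem_ints hside (by simpa using hp.rotate) (by simpa using hop)

lemma IsFractional.not_isFixed_rotate_twice (h : IsFractional V g v u) (hi : IsFixed V g v u) :
    ¬ IsFixed V g (v + rot u) (-rot u) := by
  obtain ⟨p, hp, hn⟩ := h
  intro hi'
  have hr := (hp.rotate_twice.isFixed_iff.1 hi').1
  rw [map_neg, neg_mem_iff] at hr
  exact hn (TriLattice.lin_mem_ints hp.dir (hp.isFixed_iff.1 hi).1 hr)

lemma IsTaut.not_isStiff_rotate_twice (hg : IsTaut V g) (h : IsFractional V g v u)
    (hs : IsStiff V g v u) : ¬ IsStiff V g (v + rot u) (-rot u) := by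
  rintro (hi' | ⟨hf', ht'⟩)
  · rcases hs with hi | ⟨hf, -⟩
    exacts [h.not_isFixed_rotate_twice hi hi', hf.not_isFixed_rotate_twice hi']
  · have hf := isFree_rotate_twice_iff.1 hf'
    rcases hs with hi | ⟨-, ht⟩
    exacts [hf.not_isFixed hi, hg.not_isTight_rotate_twice hf ht ht']

end Stiff

section Midpoints

variable {V : Finset LPt} {g : LPt → ℝ} {v w u a m : LPt}

/-- Twice the midpoint of the edge `v, v + u`; it encodes the edge regardless of its direction. -/
def mid (v u : LPt) : LPt := v + (v + u)

/-- The edges of the little triangle based at `v, v + u`, encoded by their midpoints. -/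
def triMids (v u : LPt) : Finset LPt :=
  {mid v u, mid (v + u) (rot u - u), mid (v + rot u) (-rot u)}

lemma mid_neg (v u : LPt) : mid (v + u) (-u) = mid v u := by
  rw [mid, mid, add_neg_cancel_right, add_comm]

lemma eq_or_eq_of_mid_eq (hu : u ∈ dirs) (ha : a ∈ dirs) (h : mid v u = mid w a) :
    v = w ∧ u = a ∨ v = w + a ∧ u = -a := by
  obtain ⟨v₁, v₂⟩ := v
  obtain ⟨w₁, w₂⟩ := w
  rcases mem_dirs.1 hu with rfl | rfl | rfl | rfl | rfl | rfl <;>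
    rcases mem_dirs.1 ha with rfl | rfl | rfl | rfl | rfl | rfl <;>
    simp [mid] at h ⊢ <;> omega

lemma mid_mem_triMids (v u : LPt) : mid v u ∈ triMids v u :=
  mem_insert_self _ _

lemma triMids_rotate (v u : LPt) : triMids (v + u) (rot u - u) = triMids v u := by
  ext m
  simp only [triMids, map_sub, rot_rot, sub_sub_cancel_left, neg_sub_rot_sub_self,
    add_add_sub_cancel, neg_neg, add_neg_cancel_right, mem_insert, mem_singleton]
  tauto

lemma sum_triMids (hu : u ∈ dirs) (x : LPt → ℝ) : ∑ m ∈ triMids v u, x m =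
    x (mid v u) + x (mid (v + u) (rot u - u)) + x (mid (v + rot u) (-rot u)) := by
  rw [triMids, sum_insert, sum_pair, add_assoc] <;>
    rcases mem_dirs.1 hu with rfl | rfl | rfl | rfl | rfl | rfl <;>
    simp [mid, rot_apply, Prod.ext_iff]

lemma disjoint_triMids (hu : u ∈ dirs) (h : v ≠ w) : Disjoint (triMids v u) (triMids w u) := by
  obtain ⟨v₁, v₂⟩ := v
  obtain ⟨w₁, w₂⟩ := w
  rw [disjoint_left]
  rintro ⟨m₁, m₂⟩ hv hw
  apply h
  rcases mem_dirs.1 hu with rfl | rfl | rfl | rfl | rfl | rfl <;>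
    simp [triMids, mid, rot_apply] at hv hw ⊢ <;> omega

/-- The edges of fractional triangles that are not fixed, encoded by their midpoints. -/
def looseMids (V : Finset LPt) (g : LPt → ℝ) : Finset LPt :=
  ((V ×ˢ dirs).filter fun s => IsFractional V g s.1 s.2 ∧ ¬ IsFixed V g s.1 s.2).image
    fun s => mid s.1 s.2

/-- The tight edges of free triangles, encoded by their midpoints. -/
def tightMids (V : Finset LPt) (g : LPt → ℝ) : Finset LPt :=
  ((V ×ˢ dirs).filter fun s => IsFree V g s.1 s.2 ∧ IsTight V g s.1 s.2).image
    fun s => mid s.1 s.2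

/-- The base points of the fractional triangles with base direction `u`. -/
def fracBases (V : Finset LPt) (g : LPt → ℝ) (u : LPt) : Finset LPt :=
  V.filter fun v => IsFractional V g v u

lemma mem_looseMids :
    m ∈ looseMids V g ↔ ∃ v u, IsFractional V g v u ∧ ¬ IsFixed V g v u ∧ mid v u = m := by
  simp only [looseMids, mem_image, mem_filter, mem_product]
  constructor
  · rintro ⟨s, ⟨-, hs⟩, rfl⟩
    exact ⟨s.1, s.2, hs.1, hs.2, rfl⟩
  · rintro ⟨v, u, h, hi, rfl⟩
    exact ⟨(v, u), ⟨⟨h.isTriangle.base, h.isTriangle.dir⟩, h, hi⟩, rfl⟩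

lemma mem_tightMids :
    m ∈ tightMids V g ↔ ∃ v u, IsFree V g v u ∧ IsTight V g v u ∧ mid v u = m := by
  simp only [tightMids, mem_image, mem_filter, mem_product]
  constructor
  · rintro ⟨s, ⟨-, hs⟩, rfl⟩
    exact ⟨s.1, s.2, hs.1, hs.2, rfl⟩
  · rintro ⟨v, u, h, ht, rfl⟩
    exact ⟨(v, u), ⟨⟨ht.left.base, ht.left.dir⟩, h, ht⟩, rfl⟩

lemma mem_fracBases : v ∈ fracBases V g u ↔ IsFractional V g v u := by
  rw [fracBases, mem_filter, and_iff_right_of_imp fun h => h.isTriangle.base]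

lemma tightMids_subset : tightMids V g ⊆ looseMids V g := fun m hm => by
  obtain ⟨v, u, hf, -, rfl⟩ := mem_tightMids.1 hm
  exact mem_looseMids.2 ⟨v, u, hf.isFractional, hf.not_isFixed, rfl⟩

lemma IsFixed.mid_notMem_looseMids (hu : u ∈ dirs) (h : IsFixed V g v u) :
    mid v u ∉ looseMids V g := by
  intro hm
  obtain ⟨w, a, hf, hi, he⟩ := mem_looseMids.1 hm
  rcases eq_or_eq_of_mid_eq hf.isTriangle.dir hu he with ⟨rfl, rfl⟩ | ⟨rfl, rfl⟩
  exacts [hi h, hi (isFixed_neg_iff.2 h)]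

lemma IsTriangle.mid_notMem_looseMids (ht : IsTriangle V v u) (h : ¬ IsFractional V g v u) :
    mid v u ∉ looseMids V g := by
  intro hm
  obtain ⟨w, a, hf, hi, he⟩ := mem_looseMids.1 hm
  rcases eq_or_eq_of_mid_eq hf.isTriangle.dir ht.dir he with ⟨rfl, rfl⟩ | ⟨rfl, rfl⟩
  · exact h hf
  · obtain ⟨p, hp⟩ := ht.exists_hasSlope g
    have hint : lin p u ∈ ints := not_not.1 (fun hn => h ⟨p, hp, fun hall => hn (hall u)⟩)
    refine hi (isFixed_neg_iff.2 ⟨hp.slope_tip ▸ hint, fun htight => h ?_⟩)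
    simpa using hf.opposite htight.neg

lemma IsTaut.mid_mem_sdiff_iff (hg : IsTaut V g) (h : IsFractional V g v u) :
    mid v u ∈ looseMids V g \ tightMids V g ↔ ¬ IsStiff V g v u := by
  have hu := h.isTriangle.dir
  rw [mem_sdiff, IsStiff, not_or]
  refine and_congr ⟨fun hm hi => hi.mid_notMem_looseMids hu hm,
    fun hi => mem_looseMids.2 ⟨v, u, h, hi, rfl⟩⟩ (not_congr ⟨fun hm => ?_,
    fun hm => mem_tightMids.2 ⟨v, u, hm.1, hm.2, rfl⟩⟩)
  obtain ⟨w, a, hf, ht, he⟩ := mem_tightMids.1 hm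
  rcases eq_or_eq_of_mid_eq hf.isFractional.isTriangle.dir hu he with ⟨rfl, rfl⟩ | ⟨rfl, rfl⟩
  · exact ⟨hf, ht⟩
  · exact ⟨by simpa using hg.isFree_opposite hf ht, isTight_neg_iff.1 ht⟩

lemma IsTaut.two_le_card_inter (hg : IsTaut V g) (h : IsFractional V g v u) :
    2 ≤ #(triMids v u ∩ (looseMids V g \ tightMids V g)) := by
  set F := looseMids V g \ tightMids V g
  have hpair {w a : LPt} (h₁ : IsFractional V g w a) (he : triMids w a = triMids v u)
      (hs₁ : ¬ IsStiff V g w a) (hs₂ : ¬ IsStiff V g (w + a) (rot a - a)) :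
      2 ≤ #(triMids v u ∩ F) := by
    have hne : mid w a ≠ mid (w + a) (rot a - a) := by
      rcases mem_dirs.1 h₁.isTriangle.dir with rfl | rfl | rfl | rfl | rfl | rfl <;>
        simp [mid, rot_apply, Prod.ext_iff]
    rw [← card_pair hne]
    refine card_le_card (insert_subset ?_ (singleton_subset_iff.2 ?_)) <;> rw [← he, mem_inter]
    · exact ⟨mid_mem_triMids w a, (hg.mid_mem_sdiff_iff h₁).2 hs₁⟩
    · rw [← triMids_rotate]
      exact ⟨mid_mem_triMids _ _, (hg.mid_mem_sdiff_iff h₁.rotate).2 hs₂⟩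
  have h₂ := h.rotate
  have h₃ : IsFractional V g (v + rot u) (-rot u) := by simpa using h₂.rotate
  by_cases hs₁ : IsStiff V g v u
  · refine hpair h₂ (triMids_rotate v u) (fun hs₂ => ?_) ?_
    · exact hg.not_isStiff_rotate_twice h₂ hs₂ (by simpa using hs₁)
    · simpa using hg.not_isStiff_rotate_twice h hs₁
  · by_cases hs₂ : IsStiff V g (v + u) (rot u - u)
    · refine hpair h₃ (by rw [← triMids_rotate v u, ← triMids_rotate (v + u)]; simp) ?_ ?_
      · exact fun hs₃ => hg.not_isStiff_rotate_twice h₃ hs₃ (by simpa using hs₂)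
      · simpa using hs₁
    · exact hpair h rfl hs₁ hs₂

lemma IsTaut.two_mul_card_le_card_inter (hg : IsTaut V g) (hu : u ∈ dirs) :
    2 * #(fracBases V g u) ≤
      #((fracBases V g u).biUnion (triMids · u) ∩ (looseMids V g \ tightMids V g)) := by
  rw [biUnion_inter, card_biUnion fun v _ w _ hvw => (disjoint_triMids hu hvw).mono
    inter_subset_left inter_subset_left, mul_comm]
  exact card_nsmul_le_sum _ _ _ fun v hv => hg.two_le_card_inter (mem_fracBases.1 hv)

lemma IsTaut.two_mul_card_add_card_le (hg : IsTaut V g) (hu : u ∈ dirs) :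
    2 * #(fracBases V g u) + #(tightMids V g) ≤ #(looseMids V g) := by
  rw [← card_sdiff_add_card_eq_card (tightMids_subset (V := V) (g := g))]
  exact Nat.add_le_add_right
    ((hg.two_mul_card_le_card_inter hu).trans (card_le_card inter_subset_right)) _

lemma IsFractional.exists_triMids_eq (h : IsFractional V g v a)
    (hua : a = u ∨ rot a - a = u ∨ -rot a = u) :
    ∃ w ∈ fracBases V g u, triMids w u = triMids v a := by
  rcases hua with rfl | rfl | rfl
  · exact ⟨v, mem_fracBases.2 h, rfl⟩
  · exact ⟨v + a, mem_fracBases.2 h.rotate, triMids_rotate v a⟩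
  · refine ⟨v + rot a, mem_fracBases.2 (by simpa using h.rotate.rotate), ?_⟩
    rw [← triMids_rotate v a, ← triMids_rotate (v + a)]
    simp

lemma IsTaut.tightMids_subset_biUnion (hg : IsTaut V g) (hu : u ∈ dirs) :
    tightMids V g ⊆ (fracBases V g u).biUnion (triMids · u) := by
  intro m hm
  obtain ⟨v, a, hf, ht, rfl⟩ := mem_tightMids.1 hm
  have hop := (hg.isFree_opposite hf ht).isFractional
  have hcases : (a = u ∨ rot a - a = u ∨ -rot a = u) ∨
      (-a = u ∨ rot (-a) - -a = u ∨ -rot (-a) = u) := by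
    rcases mem_dirs.1 ht.left.dir with rfl | rfl | rfl | rfl | rfl | rfl <;>
      rcases mem_dirs.1 hu with rfl | rfl | rfl | rfl | rfl | rfl <;> simp [rot_apply]
  rw [mem_biUnion]
  rcases hcases with hua | hua
  · obtain ⟨w, hw, he⟩ := hf.isFractional.exists_triMids_eq hua
    exact ⟨w, hw, he ▸ mid_mem_triMids v a⟩
  · obtain ⟨w, hw, he⟩ := hop.exists_triMids_eq hua
    exact ⟨w, hw, by rw [he, ← mid_neg]; exact mid_mem_triMids _ _⟩

lemma IsTaut.looseMids_subset_biUnion (hg : IsTaut V g) (hu : u ∈ dirs)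
    (hcard : 2 * #(fracBases V g u) + #(tightMids V g) = #(looseMids V g)) :
    looseMids V g ⊆ (fracBases V g u).biUnion (triMids · u) := by
  rw [← card_sdiff_add_card_eq_card (tightMids_subset (V := V) (g := g)), add_left_inj] at hcard
  have hle := hcard ▸ hg.two_mul_card_le_card_inter hu
  rw [← sdiff_union_of_subset (tightMids_subset (V := V) (g := g))]
  exact union_subset (inter_eq_right.1 (eq_of_subset_of_card_le inter_subset_right hle))
    (hg.tightMids_subset_biUnion hu)

lemma IsTaut.sum_sum_triMids (hg : IsTaut V g) (hu : u ∈ dirs)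
    (hcard : 2 * #(fracBases V g u) + #(tightMids V g) = #(looseMids V g)) {x : LPt → ℝ}
    (hx : ∀ m ∉ looseMids V g, x m = 0) :
    ∑ v ∈ fracBases V g u, ∑ m ∈ triMids v u, x m = ∑ m ∈ looseMids V g, x m := by
  rw [← sum_biUnion fun v _ w _ hvw => disjoint_triMids hu hvw]
  exact (sum_subset (hg.looseMids_subset_biUnion hu hcard) fun m _ => hx m).symm

end Midpoints

/-! ### Deforming a taut function -/

lemma exists_ne_zero_of_card_le {K ι α : Type*} [Field K] [Fintype ι]
    (L : ι → (α → K) →ₗ[K] K) (s : Finset α) (hcard : Fintype.card ι ≤ #s)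
    (hdep : Fintype.card ι = #s →
      ∃ c : ι → K, c ≠ 0 ∧ ∀ x, (∀ a ∉ s, x a = 0) → ∑ i, c i * L i x = 0) :
    ∃ x, x ≠ 0 ∧ (∀ a ∉ s, x a = 0) ∧ ∀ i, L i x = 0 := by
  let ext := Function.ExtendByZero.linearMap K (Subtype.val : s → α)
  have hext (y : s → K) (a : s) : ext y a = y a :=
    Subtype.val_injective.extend_apply y (0 : α → K) a
  have hext₀ (y : s → K) (a : α) (ha : a ∉ s) : ext y a = 0 :=
    Function.extend_apply' y (0 : α → K) a fun ⟨b, hb⟩ => ha (hb ▸ b.2)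
  let Ψ := LinearMap.pi L ∘ₗ ext
  by_contra! hx
  have hinj : Function.Injective Ψ := by
    refine (injective_iff_map_eq_zero Ψ).2 fun y hy => by_contra fun hy₀ => ?_
    obtain ⟨i, hi⟩ := hx (ext y) (fun h => hy₀ (funext fun a => by rw [← hext y, h]; rfl)) (hext₀ y)
    exact hi (congrFun hy i)
  have hle := LinearMap.finrank_le_finrank_of_injective hinj
  rw [Module.finrank_fintype_fun_eq_card, Module.finrank_fintype_fun_eq_card,
    Fintype.card_coe] at hle
  have hsurj := (LinearMap.injective_iff_surjective_of_finrank_eq_finrank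
    (by simp [hcard.antisymm hle])).1 hinj
  obtain ⟨c, hc, hcL⟩ := hdep (hcard.antisymm hle)
  refine hc (funext fun i => ?_)
  obtain ⟨y, hy⟩ := hsurj (Pi.single i 1)
  have hy' (j : ι) : L j (ext y) = (Pi.single i 1 : ι → K) j := congrFun hy j
  simpa [hy', Pi.single_apply] using hcL (ext y) (hext₀ y)

section Deformation

variable {V : Finset LPt} {g : LPt → ℝ} {v u w a m : LPt}

lemma IsFractional.exists_horizontal (h : IsFractional V g v u) :
    (∃ w ∈ fracBases V g (1, 0), triMids w (1, 0) = triMids v u) ∨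
      ∃ w ∈ fracBases V g (-1, 0), triMids w (-1, 0) = triMids v u := by
  have hcases : (u = (1, 0) ∨ rot u - u = (1, 0) ∨ -rot u = (1, 0)) ∨
      (u = (-1, 0) ∨ rot u - u = (-1, 0) ∨ -rot u = (-1, 0)) := by
    rcases mem_dirs.1 h.isTriangle.dir with rfl | rfl | rfl | rfl | rfl | rfl <;>
      simp [rot_apply]
  exact hcases.imp h.exists_triMids_eq h.exists_triMids_eq

lemma IsTriangle.sum_triMids_eq_zero (ht : IsTriangle V v u) (h : ¬ IsFractional V g v u)
    {x : LPt → ℝ} (hx : ∀ m ∉ looseMids V g, x m = 0) : ∑ m ∈ triMids v u, x m = 0 := by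
  have h₂ : ¬ IsFractional V g (v + u) (rot u - u) := fun hf =>
    h (by simpa using hf.rotate.rotate)
  have h₃ : ¬ IsFractional V g (v + rot u) (-rot u) := fun hf => h (by simpa using hf.rotate)
  rw [sum_triMids ht.dir, hx _ (ht.mid_notMem_looseMids h),
    hx _ (ht.rotate.mid_notMem_looseMids h₂), hx _ (ht.rotate_twice.mid_notMem_looseMids h₃)]
  simp

lemma IsTaut.card_sum_le (hg : IsTaut V g) :
    Fintype.card (fracBases V g (1, 0) ⊕ fracBases V g (-1, 0) ⊕ tightMids V g) ≤
      #(looseMids V g) := by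
  have h₁ := hg.two_mul_card_add_card_le (u := (1, 0)) (mem_dirs.2 (by simp))
  have h₂ := hg.two_mul_card_add_card_le (u := (-1, 0)) (mem_dirs.2 (by simp))
  simp only [Fintype.card_sum, Fintype.card_coe]
  lia

lemma IsTaut.sum_sum_triMids_eq (hg : IsTaut V g)
    (hcard : Fintype.card (fracBases V g (1, 0) ⊕ fracBases V g (-1, 0) ⊕ tightMids V g) =
      #(looseMids V g)) {x : LPt → ℝ} (hx : ∀ m ∉ looseMids V g, x m = 0) :
    ∑ w ∈ fracBases V g (1, 0), ∑ m ∈ triMids w (1, 0), x m =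
      ∑ w ∈ fracBases V g (-1, 0), ∑ m ∈ triMids w (-1, 0), x m := by
  have hu : ((1, 0) : LPt) ∈ dirs := mem_dirs.2 (by simp)
  have hu' : ((-1, 0) : LPt) ∈ dirs := mem_dirs.2 (by simp)
  have h₁ := hg.two_mul_card_add_card_le hu
  have h₂ := hg.two_mul_card_add_card_le hu'
  simp only [Fintype.card_sum, Fintype.card_coe] at hcard
  rw [hg.sum_sum_triMids hu (by lia) hx, hg.sum_sum_triMids hu' (by lia) hx]

/-- There are at least as many loose edges as equations: one for every fractional triangle and one
for every tight edge of a free triangle. If there are equally many, then the sum of the equations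
over the upward triangles and the sum over the downward triangles both equal the total over all
loose edges. -/
lemma IsTaut.exists_cocirculation (hg : IsTaut V g) (h : IsFractional V g v u) :
    ∃ x : LPt → ℝ, x ≠ 0 ∧ (∀ m ∉ looseMids V g, x m = 0) ∧
      (∀ w a, IsTriangle V w a → ∑ m ∈ triMids w a, x m = 0) ∧
      ∀ w a, IsFree V g w a → IsTight V g w a →
        x (mid (w + a) (rot a - a)) = x (mid w (a - rot a)) := by
  have hslot (m : tightMids V g) : ∃ s : LPt × LPt,
      IsTight V g s.1 s.2 ∧ mid s.1 s.2 = m := by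
    obtain ⟨w, a, -, hwa⟩ := mem_tightMids.1 m.2
    exact ⟨(w, a), hwa⟩
  choose s hst hsm using hslot
  let circ (w a : LPt) : (LPt → ℝ) →ₗ[ℝ] ℝ := ∑ m ∈ triMids w a, .proj m
  let para (w a : LPt) : (LPt → ℝ) →ₗ[ℝ] ℝ :=
    .proj (mid (w + a) (rot a - a)) - .proj (mid w (a - rot a))
  let L := Sum.elim (fun w : fracBases V g (1, 0) => circ w (1, 0)) <|
    Sum.elim (fun w : fracBases V g (-1, 0) => circ w (-1, 0)) fun m => para (s m).1 (s m).2
  obtain ⟨x, hx₀, hx, hL⟩ := exists_ne_zero_of_card_le L (looseMids V g) hg.card_sum_le (by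
    refine fun hcard => ⟨Sum.elim 1 (Sum.elim (-1) 0), fun hc => ?_, fun x hx => ?_⟩
    · rcases h.exists_horizontal with ⟨b, hb, -⟩ | ⟨b, hb, -⟩
      · simpa using congrFun hc (.inl ⟨b, hb⟩)
      · simpa using congrFun hc (.inr (.inl ⟨b, hb⟩))
    · have h := hg.sum_sum_triMids_eq hcard hx
      rw [← sum_coe_sort, ← sum_coe_sort (fracBases V g (-1, 0))] at h
      simpa [L, circ, sum_neg_distrib, ← sub_eq_add_neg, sub_eq_zero] using h)
  refine ⟨x, hx₀, hx, fun w a ht => ?_, fun w a hf ht => ?_⟩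
  · by_cases hfrac : IsFractional V g w a
    · rcases hfrac.exists_horizontal with ⟨b, hb, he⟩ | ⟨b, hb, he⟩
      · simpa [L, circ, he] using hL (.inl ⟨b, hb⟩)
      · simpa [L, circ, he] using hL (.inr (.inl ⟨b, hb⟩))
    · exact ht.sum_triMids_eq_zero hfrac hx
  · obtain ⟨m, hm⟩ : ∃ m : tightMids V g, m.1 = mid w a :=
      ⟨⟨mid w a, mem_tightMids.2 ⟨w, a, hf, ht, rfl⟩⟩, rfl⟩
    have hpara := sub_eq_zero.1 (hL (.inr (.inr m)))
    rcases eq_or_eq_of_mid_eq (hst m).left.dir ht.left.dir ((hsm m).trans hm) with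
      ⟨h₁, h₂⟩ | ⟨h₁, h₂⟩ <;> rw [h₁, h₂] at hpara
    · exact hpara
    · simpa [neg_add_eq_sub] using hpara.symm

/-- The sign of a unit direction that distinguishes the edges oriented along `ξ₁`, `ξ₂`, `ξ₃`
from the reversed ones. -/
def dirSign (u : LPt) : ℝ := if u = (1, 0) ∨ u = (0, 1) ∨ u = (-1, -1) then 1 else -1

lemma dirSign_neg (hu : u ∈ dirs) : dirSign (-u) = -dirSign u := by
  rcases mem_dirs.1 hu with rfl | rfl | rfl | rfl | rfl | rfl <;> simp [dirSign]

lemma dirSign_rot_sub (hu : u ∈ dirs) : dirSign (rot u - u) = dirSign u := by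
  rcases mem_dirs.1 hu with rfl | rfl | rfl | rfl | rfl | rfl <;> simp [dirSign, rot_apply]

/-- The function `φ` has increment `x (mid v u)` along every edge of `S` oriented along one of
`ξ₁`, `ξ₂`, `ξ₃`. -/
def IsPotential (S : Finset LPt) (x φ : LPt → ℝ) : Prop :=
  ∀ v ∈ S, ∀ u ∈ dirs, v + u ∈ S → φ (v + u) - φ v = dirSign u * x (mid v u)

lemma IsPotential.of_pos {S : Finset LPt} {x φ : LPt → ℝ}
    (h : ∀ v ∈ S, ∀ u, u = (1, 0) ∨ u = (1, 1) ∨ u = (0, 1) → v + u ∈ S →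
      φ (v + u) - φ v = dirSign u * x (mid v u)) : IsPotential S x φ := by
  intro v hv u hu hvu
  have hpos : (u = (1, 0) ∨ u = (1, 1) ∨ u = (0, 1)) ∨
      (-u = (1, 0) ∨ -u = (1, 1) ∨ -u = (0, 1)) := by
    rcases mem_dirs.1 hu with rfl | rfl | rfl | rfl | rfl | rfl <;> simp
  rcases hpos with hs | hs
  · exact h v hv u hs hvu
  · have h' := h _ hvu _ hs (by simpa using hv)
    rw [dirSign_neg hu, mid_neg, add_neg_cancel_right] at h'
    linear_combination -h'

lemma IsPotential.value_eq {S : Finset LPt} {x φ : LPt → ℝ} {b : LPt} (hφ : IsPotential S x φ)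
    (hu : u ∈ dirs) (h₁ : b - u ∈ S) (h₂ : b - (u - rot u) ∈ S)
    (hx : ∑ m ∈ triMids (b - u) u, x m = 0) :
    φ (b - u) + dirSign u * x (mid (b - u) u) =
      φ (b - (u - rot u)) + dirSign (u - rot u) * x (mid (b - (u - rot u)) (u - rot u)) := by
  have hr := sub_add b u (rot u)
  have hmid : mid b (rot u - u) = mid (b - (u - rot u)) (u - rot u) := by
    rw [← mid_neg (b - (u - rot u)), sub_add_cancel, neg_sub]
  have hsign : dirSign (u - rot u) = -dirSign u := by
    rw [← dirSign_rot_sub hu, ← dirSign_neg (rot_sub_mem_dirs hu), neg_sub]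
  have hsign' : dirSign (-rot u) = dirSign u := by
    rw [← dirSign_rot_sub hu, ← dirSign_rot_sub (rot_sub_mem_dirs hu)]; simp
  have hedge := hφ _ h₂ _ (neg_mem_dirs (rot_mem_dirs hu)) (by rwa [← hr, add_neg_cancel_right])
  rw [← hr, add_neg_cancel_right, hsign', hr] at hedge
  rw [sum_triMids hu, sub_add_cancel, hr, hmid] at hx
  rw [hsign]
  linear_combination hedge + dirSign u * hx

lemma IsPotential.exists_value {S : Finset LPt} {x φ : LPt → ℝ} {b : LPt}
    (hφ : IsPotential S x φ) (hS : b - (1, 0) ∈ S → b - (0, 1) ∈ S → b - (1, 1) ∈ S)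
    (hx : ∀ v u, IsTriangle (insert b S) v u → ∑ m ∈ triMids v u, x m = 0) :
    ∃ c, ∀ u, u = (1, 0) ∨ u = (1, 1) ∨ u = (0, 1) → b - u ∈ S →
      c - φ (b - u) = dirSign u * x (mid (b - u) u) := by
  have heq {u w : LPt} (hu : u ∈ dirs) (hw : u - rot u = w) (h₁ : b - u ∈ S) (h₂ : b - w ∈ S) :
      φ (b - u) + dirSign u * x (mid (b - u) u) = φ (b - w) + dirSign w * x (mid (b - w) w) := by
    subst hw
    exact hφ.value_eq hu h₁ h₂ (hx _ _ ⟨hu, mem_insert_of_mem h₁, by simp,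
      mem_insert_of_mem (by rwa [sub_add])⟩)
  have h₁₀ := heq (u := (1, 1)) (w := (1, 0)) (mem_dirs.2 (by simp)) (by simp [rot_apply])
  have h₀₁ := heq (u := (0, 1)) (w := (1, 1)) (mem_dirs.2 (by simp)) (by simp [rot_apply])
  by_cases h : b - (1, 1) ∈ S
  · refine ⟨φ (b - (1, 1)) + dirSign (1, 1) * x (mid (b - (1, 1)) (1, 1)), ?_⟩
    rintro u (rfl | rfl | rfl) hu
    · linear_combination h₁₀ h hu
    · ring
    · linear_combination -h₀₁ hu h
  · by_cases h' : b - (1, 0) ∈ S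
    · refine ⟨φ (b - (1, 0)) + dirSign (1, 0) * x (mid (b - (1, 0)) (1, 0)), ?_⟩
      rintro u (rfl | rfl | rfl) hu
      exacts [by ring, absurd hu h, absurd (hS h' hu) h]
    · refine ⟨φ (b - (0, 1)) + dirSign (0, 1) * x (mid (b - (0, 1)) (0, 1)), ?_⟩
      rintro u (rfl | rfl | rfl) hu
      exacts [absurd hu h', absurd hu h, by ring]

lemma toLex_lt_toLex_add_of_pos (b : LPt) (hu : u = (1, 0) ∨ u = (1, 1) ∨ u = (0, 1)) :
    toLex b < toLex (b + u) := by
  rw [Prod.Lex.toLex_lt_toLex]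
  rcases hu with rfl | rfl | rfl <;> simp

/-- Discrete Poincaré lemma: the points of `S` are inserted in lexicographic order. -/
lemma exists_isPotential (S : Finset LPt) (x : LPt → ℝ)
    (hS : ∀ b ∈ S, b - (1, 0) ∈ S → b - (0, 1) ∈ S → b - (1, 1) ∈ S)
    (hx : ∀ v u, IsTriangle S v u → ∑ m ∈ triMids v u, x m = 0) : ∃ φ, IsPotential S x φ := by
  induction S using Finset.induction_on_max_value (toLex : LPt → Lex LPt) with
  | empty => exact ⟨0, fun v hv => absurd hv (notMem_empty v)⟩
  | insert b S hb hmax ih =>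
    have hmem {v u} (hv : v ∈ insert b S) (hu : u = (1, 0) ∨ u = (1, 1) ∨ u = (0, 1))
        (h : v - u ∈ insert b S) : v - u ∈ S := by
      refine (mem_insert.1 h).resolve_left fun he => ?_
      have hlt := toLex_lt_toLex_add_of_pos (v - u) hu
      rw [sub_add_cancel, he] at hlt
      rcases mem_insert.1 hv with rfl | hv
      exacts [hlt.false, hlt.not_ge (hmax v hv)]
    have hsub := subset_insert b S
    obtain ⟨φ, hφ⟩ := ih
      (fun v hv h₁ h₂ => hmem (hsub hv) (by simp) (hS v (hsub hv) (hsub h₁) (hsub h₂)))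
      fun v u h => hx v u ⟨h.dir, hsub h.base, hsub h.tip, hsub h.apex⟩
    have hbS := mem_insert_self b S
    obtain ⟨c, hc⟩ := hφ.exists_value (fun h₁ h₂ => hmem hbS (by simp) (hS b hbS (hsub h₁)
      (hsub h₂))) hx
    refine ⟨Function.update φ b c, .of_pos fun v hv u hu hvu => ?_⟩
    have hvS : v ∈ S := by simpa using hmem hvu hu (by simpa using hv)
    rw [Function.update_of_ne (ne_of_mem_of_not_mem hvS hb)]
    rcases mem_insert.1 hvu with h | h
    · obtain rfl : v = b - u := by rw [← h, add_sub_cancel_right]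
      rw [sub_add_cancel, Function.update_self, hc u hu hvS]
    · rw [Function.update_of_ne (ne_of_mem_of_not_mem h hb)]
      exact hφ v hvS u (mem_dirs.2 (by tauto)) h

lemma EdgeConvex.exists_isTriangle (hV : EdgeConvex V) (ht : IsTriangle V v u) {b : LPt}
    (hb : b ∈ V) : ∃ a, IsTriangle V b a :=
  hV.walk_induction hb (motive := fun _ _ => ∃ a, IsTriangle V b a) (fun a h => ⟨a, h⟩)
    (fun _ _ _ h => h) (fun _ _ _ _ _ h => h) ht

lemma EdgeConvex.add_rot_mem (hV : EdgeConvex V) (ht : IsTriangle V v a) (hu : u ∈ dirs)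
    (h₁ : v + u ∈ V) (h₂ : v + (rot u - u) ∈ V) : v + rot u ∈ V := by
  have hright {b c : LPt} (h : IsTriangle V v b) (hc : v + c ∈ V) (hbc : cross b c < 0) :
      IsTriangle V v (b - rot b) := by
    simpa [neg_add_eq_sub, ← sub_eq_add_neg] using
      (h.opposite (hV v b _ h hc (by simpa using hbc))).rotate
  have hcross : cross (rot u - u) u < 0 ∧ cross (-u) (rot u - u) < 0 ∧
      cross (-rot u) (rot u - u) < 0 ∧ cross (-u) (rot u - u - u) < 0 := by
    rcases mem_dirs.1 hu with rfl | rfl | rfl | rfl | rfl | rfl <;> simp [rot_apply, cross_apply]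
  have hcases : a = u ∨ a = rot u ∨ a = rot u - u ∨ a = -u ∨ a = -rot u ∨ a = u - rot u := by
    rcases mem_dirs.1 hu with rfl | rfl | rfl | rfl | rfl | rfl <;>
      simpa [rot_apply, or_comm, or_left_comm, or_assoc] using mem_dirs.1 ht.dir
  have htwo (h : IsTriangle V v (rot u - u)) : v + rot u ∈ V := by
    simpa using (hright h h₁ hcross.1).tip
  have hthree (h : IsTriangle V v (-u)) : v + rot u ∈ V :=
    htwo (by simpa [neg_add_eq_sub] using hright h h₂ hcross.2.1)
  rcases hcases with rfl | rfl | rfl | rfl | rfl | rfl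
  · exact ht.apex
  · exact ht.tip
  · exact htwo ht
  · exact hthree ht
  · exact hthree (by simpa only [map_neg, rot_rot, sub_neg_eq_add, neg_add_eq_sub,
      sub_sub_cancel_left] using hright ht h₂ hcross.2.2.1)
  · have hleft : IsTriangle V (v + u) (-u) := by simpa using ht.rotate_twice
    simpa using hV _ _ _ hleft h₂ (by simpa using hcross.2.2.2)

lemma IsPotential.slack_eq {x φ : LPt → ℝ} (hφ : IsPotential V x φ) (ht : IsTriangle V v u)
    (hop : v + u - rot u ∈ V) : slack φ v u =
      dirSign u * (x (mid v (u - rot u)) - x (mid (v + u) (rot u - u))) := by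
  have h₁ := hφ _ ht.tip _ (rot_sub_mem_dirs ht.dir) (by simpa using ht.apex)
  have h₂ := hφ v ht.base _ (sub_rot_mem_dirs ht.dir) (by rwa [← add_sub_assoc])
  have hsign : dirSign (u - rot u) = -dirSign u := by
    rw [← dirSign_rot_sub ht.dir, ← dirSign_neg (rot_sub_mem_dirs ht.dir), neg_sub]
  rw [hsign, ← add_sub_assoc] at h₂
  rw [add_add_sub_cancel, dirSign_rot_sub ht.dir] at h₁
  unfold slack
  linear_combination -h₁ - h₂

lemma IsTaut.mid_rotate_eq (hg : IsTaut V g) {x : LPt → ℝ} (hx : ∀ m ∉ looseMids V g, x m = 0)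
    (hcirc : ∀ w a, IsTriangle V w a → ∑ m ∈ triMids w a, x m = 0)
    (hpara : ∀ w a, IsFree V g w a → IsTight V g w a →
      x (mid (w + a) (rot a - a)) = x (mid w (a - rot a))) (ht : IsTight V g v u) :
    x (mid (v + u) (rot u - u)) = x (mid v (u - rot u)) := by
  have hu := ht.left.dir
  by_cases hf : IsFractional V g v u
  · by_cases hr : IsFixed V g (v + u) (rot u - u)
    · have hr' := hg.isFixed_parallel' hf ht hr
      rw [hx _ (hr.mid_notMem_looseMids (rot_sub_mem_dirs hu)),
        hx _ (hr'.mid_notMem_looseMids (sub_rot_mem_dirs hu))]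
    by_cases hl : IsFixed V g (v + rot u) (-rot u)
    · have hl' := hg.isFixed_parallel hf ht hl
      have hsum := hcirc v u ht.left
      have hsum' := hcirc (v + u) (-u) ht.right
      rw [sum_triMids hu, hx _ (hl.mid_notMem_looseMids (neg_mem_dirs (rot_mem_dirs hu)))] at hsum
      rw [sum_triMids (neg_mem_dirs hu), mid_neg, add_neg_cancel_right, map_neg, neg_sub_neg,
        neg_neg, ← sub_eq_add_neg, hx _ (hl'.mid_notMem_looseMids (rot_mem_dirs hu))] at hsum'
      linarith
    exact hpara v u ⟨hf, fun hi => hi.2 ht, hr, hl⟩ ht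
  · have hr : ¬ IsFractional V g (v + u) (rot u - u) := fun h =>
      hf (by simpa using h.rotate.rotate)
    have hcorner : v + (u - rot u) + rot u = v + u := by rw [add_assoc, sub_add_cancel]
    have hr' : ¬ IsFractional V g v (u - rot u) := fun h =>
      hf (by simpa [hcorner] using h.rotate.rotate.opposite (by simpa [hcorner] using ht.neg))
    have ht' : IsTriangle V v (u - rot u) := by simpa [neg_add_eq_sub] using ht.right.rotate
    rw [hx _ (ht.left.rotate.mid_notMem_looseMids hr), hx _ (ht'.mid_notMem_looseMids hr')]

lemma IsPotential.congr {x φ ψ : LPt → ℝ} (hφ : IsPotential V x φ) (c : ℝ)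
    (h : ∀ w ∈ V, ψ w = φ w - c) : IsPotential V x ψ := fun v hv u hu hvu => by
  rw [h v hv, h _ hvu, sub_sub_sub_cancel_right, hφ v hv u hu hvu]

lemma IsTaut.exists_direction (hg : IsTaut V g) (h : IsFractional V g v u) (v₀ : LPt) :
    ∃ δ : LPt → ℝ, δ v₀ = 0 ∧ (∃ w ∈ V, δ w ≠ 0) ∧ (∀ w ∉ V, δ w = 0) ∧
      (∀ w a, IsTight V g w a → slack δ w a = 0) ∧
      (∀ w a, IsTriangle V w a → IsFixed V g w a → δ (w + a) = δ w) ∧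
      ∀ w a, IsTriangle V w a → ¬ IsFractional V g w a → δ (w + a) = δ w := by
  obtain ⟨x, hx₀, hx, hcirc, hpara⟩ := hg.exists_cocirculation h
  obtain ⟨φ, hφ⟩ := exists_isPotential V x (fun b hb h₁ h₂ => by
    obtain ⟨a, ha⟩ := hg.edgeConvex.exists_isTriangle h.isTriangle hb
    simpa [rot_apply, sub_eq_add_neg] using hg.edgeConvex.add_rot_mem ha (u := (-1, 0))
      (mem_dirs.2 (by simp)) (by simpa [sub_eq_add_neg] using h₁)
      (by simpa [rot_apply, sub_eq_add_neg] using h₂)) hcirc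
  set δ : LPt → ℝ := fun w => if w ∈ V then φ w - φ v₀ else 0
  have hδ : IsPotential V x δ := hφ.congr (φ v₀) fun w hw => if_pos hw
  have hconst {w a : LPt} (ht : IsTriangle V w a) (hm : mid w a ∉ looseMids V g) :
      δ (w + a) = δ w := by
    have := hδ w ht.base a ht.dir ht.tip
    rwa [hx _ hm, mul_zero, sub_eq_zero] at this
  refine ⟨δ, by simp [δ], ?_, fun w hw => if_neg hw, fun w a ht => ?_,
    fun w a ht hi => hconst ht (hi.mid_notMem_looseMids ht.dir),
    fun w a ht hf => hconst ht (ht.mid_notMem_looseMids hf)⟩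
  · by_contra! hzero
    refine hx₀ (funext fun m => by_contra fun hm => ?_)
    obtain ⟨w, a, hf, -, rfl⟩ := mem_looseMids.1 (by_contra fun hn => hm (hx m hn))
    have ht := hf.isTriangle
    have hedge := hδ w ht.base a ht.dir ht.tip
    rw [hzero w ht.base, hzero _ ht.tip, sub_zero, eq_comm] at hedge
    exact (mul_ne_zero (by unfold dirSign; split_ifs <;> norm_num) hm) hedge
  · rw [hδ.slack_eq ht.left ht.right.opposite_apex, hg.mid_rotate_eq hx hcirc hpara ht, sub_self,
      mul_zero]

end Deformation

/-! ### The extremal argument -/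

section Extremal

variable {V : Finset LPt} {g φ : LPt → ℝ} {v₀ v u : LPt}

/-- A direction in which `g` can be moved a little, keeping it grid-concave and keeping the fixed
edges and the integral little triangles. -/
structure IsFeasible (V : Finset LPt) (g φ : LPt → ℝ) : Prop where
  slack_nonneg {v u : LPt} : IsTight V g v u → 0 ≤ slack φ v u
  eq_of_isFixed {v u : LPt} : IsTriangle V v u → IsFixed V g v u → φ (v + u) = φ v
  eq_of_not_isFractional {v u : LPt} : IsTriangle V v u → ¬ IsFractional V g v u → φ (v + u) = φ v

lemma IsTriangle.not_isFractional_iff (h : IsTriangle V v u) : ¬ IsFractional V g v u ↔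
    g (v + u) - g v ∈ ints ∧ g (v + rot u) - g v ∈ ints := by
  obtain ⟨p, hp⟩ := h.exists_hasSlope g
  rw [hp.slope_tip, hp.slope_apex]
  refine ⟨fun hf => ?_, fun hi hf => ?_⟩
  · have : ∀ a, lin p a ∈ ints := by_contra fun hn => hf ⟨p, hp, hn⟩
    exact ⟨this _, this _⟩
  · obtain ⟨q, hq, hn⟩ := hf
    exact hn (hq.unique hp ▸ TriLattice.lin_mem_ints h.dir hi.1 hi.2)

lemma GridConcave.isFeasible_spread (hg : GridConcave V g) : IsFeasible V g (spread V g) where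
  slack_nonneg h := h.slack_spread_nonneg hg
  eq_of_isFixed h hi := h.spread_tip_eq hg hi.2 hi.1
  eq_of_not_isFractional h hf := by
    have hzero {v u : LPt} (h : IsTriangle V v u) (hf : ¬ IsFractional V g v u) :
        spread V g v = 0 := by
      obtain ⟨hi, hi'⟩ := h.not_isFractional_iff.1 hf
      exact h.spread_eq_zero hg hi hi'
    rw [hzero h hf, hzero h.rotate fun h' => hf (by simpa using h'.rotate.rotate)]

lemma IsFeasible.isTight_of_ne (hφ : IsFeasible V g φ) (h : IsTriangle V v u)
    (hi : g (v + u) - g v ∈ ints) (hne : φ (v + u) ≠ φ v) : IsTight V g v u :=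
  by_contra fun hn => hne (hφ.eq_of_isFixed h ⟨hi, hn⟩)

/-- The edge `v, v + u` has the increment `M`, the largest one allowed, and moving `g` along `φ`
would increase it. -/
structure IsObstacle (V : Finset LPt) (g φ : LPt → ℝ) (M : ℝ) (u v : LPt) : Prop where
  isTight : IsTight V g v u
  sub_eq : g (v + u) - g v = M
  lt : φ v < φ (v + u)

variable {M : ℝ}

lemma IsObstacle.above (h : IsObstacle V g φ M u v) (hg : GridConcave V g)
    (hφ : IsFeasible V g φ) (hM : M ∈ ints)
    (hle : ∀ v u, IsTriangle V v u → |g (v + u) - g v| ≤ M) (hv : v + (rot u - u) ∈ V) :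
    IsObstacle V g φ M u (v + (rot u - u)) := by
  have ht := h.isTight.left
  have hup : IsTriangle V v (rot u) :=
    ⟨rot_mem_dirs ht.dir, ht.base, ht.apex, by rwa [rot_rot]⟩
  have hopp : v + rot u - rot (rot u) = v + u := by rw [rot_rot]; abel
  have hend : v + rot u + -u = v + (rot u - u) := by abel
  have hend' : v + (rot u - u) + u = v + rot u := by abel
  have hpar : IsTriangle V (v + rot u) (-u) := by simpa using hup.rotate
  have hslack (f : LPt → ℝ) : slack f v (rot u) =
      f (v + rot u) - f (v + (rot u - u)) - (f (v + u) - f v) := by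
    rw [slack, hopp, rot_rot]
    ring
  have hbound := (abs_le.1 (hle _ _ hpar)).1
  have hnonneg := hg.slack_nonneg hup (hopp ▸ ht.tip)
  rw [hend] at hbound
  have hzero : slack g v (rot u) = 0 := le_antisymm (by linarith [hslack g, h.sub_eq]) hnonneg
  have hsub : g (v + rot u) - g (v + (rot u - u)) = M := by linarith [hslack g, h.sub_eq]
  have hlt : φ (v + (rot u - u)) < φ (v + rot u) := by
    linarith [hslack φ, h.lt, hφ.slack_nonneg ⟨hup, hup.opposite (hopp ▸ ht.tip), hzero⟩]
  refine ⟨?_, by rwa [hend'], by rwa [hend']⟩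
  have := hφ.isTight_of_ne hpar (by rw [hend, ← neg_sub, hsub]; exact neg_mem hM)
    (by rw [hend]; exact hlt.ne)
  simpa [hend] using this.neg

lemma IsObstacle.below (h : IsObstacle V g φ M u v) (hg : GridConcave V g)
    (hφ : IsFeasible V g φ) (hM : M ∈ ints)
    (hle : ∀ v u, IsTriangle V v u → |g (v + u) - g v| ≤ M) (hv : v - rot u ∈ V) :
    IsObstacle V g φ M u (v - rot u) := by
  have ht := h.isTight.left
  have hopp : v + (u - rot u) - rot (u - rot u) = v - rot u := by rw [map_sub, rot_rot]; abel
  have hend : v - rot u + u = v + (u - rot u) := by abel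
  have hdown : IsTriangle V v (u - rot u) := by
    simpa [neg_add_eq_sub] using h.isTight.right.rotate
  have hpar : IsTriangle V (v - rot u) u :=
    ⟨ht.dir, hv, hend ▸ hdown.tip, by simpa using ht.base⟩
  have hslack (f : LPt → ℝ) : slack f v (u - rot u) =
      f (v + (u - rot u)) - f (v - rot u) - (f (v + u) - f v) := by
    rw [slack, hopp, map_sub, rot_rot, sub_sub_cancel]
    ring
  have hbound := (abs_le.1 (hle _ _ hpar)).2
  have hnonneg := hg.slack_nonneg hdown (hopp ▸ hv)
  rw [hend] at hbound
  have hzero : slack g v (u - rot u) = 0 := le_antisymm (by linarith [hslack g, h.sub_eq]) hnonneg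
  have hsub : g (v + (u - rot u)) - g (v - rot u) = M := by linarith [hslack g, h.sub_eq]
  have hlt : φ (v - rot u) < φ (v + (u - rot u)) := by
    linarith [hslack φ, h.lt, hφ.slack_nonneg ⟨hdown, hdown.opposite (hopp ▸ hv), hzero⟩]
  exact ⟨hφ.isTight_of_ne hpar (by rwa [hend, hsub]) (by rw [hend]; exact hlt.ne'), by rwa [hend],
    by rwa [hend]⟩

/-- The obstacle spreads to both sides as far as the polygon reaches, where the two boundary edges
leaving its base are too short for it. -/
lemma IsFeasible.le_of_sub_eq (hφ : IsFeasible V g φ) (hg : GridConcave V g) (hM : M ∈ ints)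
    (hle : ∀ v u, IsTriangle V v u → |g (v + u) - g v| ≤ M)
    (hlt : ∀ v u, IsTriangle V v u → v + u - rot u ∉ V → 2 * |g (v + u) - g v| < M)
    (ht : IsTriangle V v u) (h : g (v + u) - g v = M) : φ (v + u) ≤ φ v := by
  by_contra! hn
  have hne : ({x ∈ V | IsObstacle V g φ M u x} : Finset LPt).Nonempty :=
    ⟨v, mem_filter.2 ⟨ht.base, hφ.isTight_of_ne ht (by rwa [h]) hn.ne', h, hn⟩⟩
  obtain ⟨x, hx, hmax⟩ := exists_max_image _ (fun x => cross (rot u + (rot u - u)) x) hne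
  have hobs := (mem_filter.1 hx).2
  have hfar (y : LPt) (hy : 0 < cross (rot u + (rot u - u)) (y - x)) :
      ¬ IsObstacle V g φ M u y := fun h' => by
    have := hmax y (mem_filter.2 ⟨h'.isTight.left.base, h'⟩)
    rw [map_sub] at hy
    linarith
  have hcross := cross_rot ht.dir
  have hcross' : cross (rot u) u = -1 := by
    rcases mem_dirs.1 ht.dir with rfl | rfl | rfl | rfl | rfl | rfl <;>
      simp [rot_apply, cross_apply]
  have hout : x + (rot u - u) ∉ V := fun hmem =>
    hfar _ (by simp [hcross, hcross']) (hobs.above hg hφ hM hle hmem)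
  have hout' : x - rot u ∉ V := fun hmem =>
    hfar _ (by simp [hcross]) (hobs.below hg hφ hM hle hmem)
  have hdown : IsTriangle V x (u - rot u) := by
    simpa [neg_add_eq_sub] using hobs.isTight.right.rotate
  have h₁ := hlt _ _ hobs.isTight.left.rotate_twice
    (by rwa [add_neg_cancel_right, map_neg, rot_rot, sub_neg_eq_add])
  have h₂ := hlt _ _ hdown (by rwa [map_sub, rot_rot, sub_sub_cancel, ← add_sub_assoc,
    add_sub_right_comm, add_sub_cancel_right])
  have hslack := hobs.isTight.slack_eq_zero
  rw [add_neg_cancel_right] at h₁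
  rw [← add_sub_assoc] at h₂
  rw [slack] at hslack
  linarith [neg_abs_le (g x - g (x + rot u)), le_abs_self (g (x + u - rot u) - g x), hobs.sub_eq]

/-- The polytope of grid-concave functions on `V`, normalised to vanish at `v₀` and outside `V`,
whose increments along the edges are bounded by the integers `lo` and `hi`. -/
structure IsAdmissible (V : Finset LPt) (v₀ : LPt) (lo hi : LPt → LPt → ℤ) (g : LPt → ℝ) : Prop
    extends GridConcave V g where
  eq_zero_of_notMem {v : LPt} : v ∉ V → g v = 0
  eq_zero_base : g v₀ = 0
  mem_Icc {v u : LPt} : IsTriangle V v u → g (v + u) - g v ∈ Set.Icc (lo v u : ℝ) (hi v u)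

variable {lo hi : LPt → LPt → ℤ}

lemma isClosed_setOf_isAdmissible (hV : EdgeConvex V) (v₀ : LPt) (lo hi : LPt → LPt → ℤ) :
    IsClosed {g | IsAdmissible V v₀ lo hi g} := by
  have heq : {g | IsAdmissible V v₀ lo hi g} =
      {g | (∀ v u, IsTriangle V v u → v + u - rot u ∈ V → 0 ≤ slack g v u) ∧
        (∀ v, v ∉ V → g v = 0) ∧ g v₀ = 0 ∧ ∀ v u, IsTriangle V v u →
          (lo v u : ℝ) ≤ g (v + u) - g v ∧ g (v + u) - g v ≤ hi v u} :=
    Set.ext fun g => ⟨fun h => ⟨fun _ _ => h.slack_nonneg, fun _ => h.eq_zero_of_notMem,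
      h.eq_zero_base, fun _ _ => h.mem_Icc⟩,
      fun h => ⟨⟨hV, h.1 _ _⟩, h.2.1 _, h.2.2.1, h.2.2.2 _ _⟩⟩
  simp only [heq, slack, Set.ofPred_and, Set.ofPred_forall]
  exact (isClosed_iInter fun _ => isClosed_iInter fun _ => isClosed_iInter fun _ =>
      isClosed_iInter fun _ => isClosed_le (by fun_prop) (by fun_prop)).inter <|
    (isClosed_iInter fun _ => isClosed_iInter fun _ =>
      isClosed_eq (by fun_prop) (by fun_prop)).inter <|
    (isClosed_eq (by fun_prop) (by fun_prop)).inter <|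
    isClosed_iInter fun _ => isClosed_iInter fun _ => isClosed_iInter fun _ =>
      (isClosed_le (by fun_prop) (by fun_prop)).inter (isClosed_le (by fun_prop) (by fun_prop))

lemma exists_abs_le_of_isAdmissible (hV : EdgeConvex V) (h₀ : v₀ ∈ V)
    (ht : IsTriangle V v u) (lo hi : LPt → LPt → ℤ) :
    ∃ K : ℝ, ∀ g, IsAdmissible V v₀ lo hi g → |g v| ≤ K := by
  have hstep {v u : LPt} (ht : IsTriangle V v u)
      (h : ∃ K : ℝ, ∀ g, IsAdmissible V v₀ lo hi g → |g (v + u)| ≤ K) :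
      ∃ K : ℝ, ∀ g, IsAdmissible V v₀ lo hi g → |g v| ≤ K := by
    obtain ⟨K, hK⟩ := h
    refine ⟨K + max |(lo v u : ℝ)| |(hi v u : ℝ)|, fun g hg => ?_⟩
    have hedge := abs_le_max_abs_abs (hg.mem_Icc ht).1 (hg.mem_Icc ht).2
    calc |g v| = |g (v + u) - (g (v + u) - g v)| := by rw [sub_sub_cancel]
      _ ≤ |g (v + u)| + |g (v + u) - g v| := abs_sub ..
      _ ≤ _ := add_le_add (hK g hg) hedge
  exact hV.walk_induction h₀
    (motive := fun v _ => ∃ K : ℝ, ∀ g, IsAdmissible V v₀ lo hi g → |g v| ≤ K)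
    (fun _ _ => ⟨0, fun g hg => by rw [hg.eq_zero_base, abs_zero]⟩) (fun _ _ => hstep)
    (fun _ _ ht _ _ => hstep ht) ht

lemma isCompact_setOf_isAdmissible (hV : EdgeConvex V) (h₀ : v₀ ∈ V) (ht : IsTriangle V v u)
    (lo hi : LPt → LPt → ℤ) : IsCompact {g | IsAdmissible V v₀ lo hi g} := by
  have hbound (x : LPt) : ∃ K : ℝ, ∀ g, IsAdmissible V v₀ lo hi g → |g x| ≤ K := by
    by_cases hx : x ∈ V
    · obtain ⟨a, ha⟩ := hV.exists_isTriangle ht hx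
      exact exists_abs_le_of_isAdmissible hV h₀ ha lo hi
    · exact ⟨0, fun g hg => by rw [hg.eq_zero_of_notMem hx, abs_zero]⟩
  choose K hK using hbound
  exact (isCompact_univ_pi fun x => isCompact_Icc (a := -K x) (b := K x)).of_isClosed_subset
    (isClosed_setOf_isAdmissible hV v₀ lo hi) fun g hg x _ => abs_le.1 (hK x g hg)

open Filter Topology in
lemma eventually_nonneg_add_mul {a b : ℝ} (ha : 0 ≤ a) (hb : a = 0 → 0 ≤ b) :
    ∀ᶠ ε in 𝓝[>] (0 : ℝ), 0 ≤ a + ε * b := by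
  rcases ha.eq_or_lt with rfl | ha
  · filter_upwards [self_mem_nhdsWithin] with ε hε
    simpa using mul_nonneg (le_of_lt hε) (hb rfl)
  · have hc : Tendsto (fun ε : ℝ => a + ε * b) (𝓝 0) (𝓝 (a + 0 * b)) :=
      Continuous.tendsto (by fun_prop) 0
    rw [zero_mul, add_zero] at hc
    exact ((hc.eventually (lt_mem_nhds ha)).filter_mono nhdsWithin_le_nhds).mono fun _ => le_of_lt

open Filter Topology in
lemma IsAdmissible.eventually_add_smul (hg : IsAdmissible V v₀ lo hi g)
    (hout : ∀ v ∉ V, φ v = 0) (h₀ : φ v₀ = 0)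
    (hslack : ∀ v u, IsTight V g v u → 0 ≤ slack φ v u)
    (hlo : ∀ v u, IsTriangle V v u → g (v + u) - g v = lo v u → φ v ≤ φ (v + u))
    (hhi : ∀ v u, IsTriangle V v u → g (v + u) - g v = hi v u → φ (v + u) ≤ φ v) :
    ∀ᶠ ε in 𝓝[>] (0 : ℝ), IsAdmissible V v₀ lo hi (g + ε • φ) := by
  have hev : ∀ᶠ ε in 𝓝[>] (0 : ℝ), ∀ v ∈ V, ∀ u ∈ dirs, IsTriangle V v u →
      (v + u - rot u ∈ V → 0 ≤ slack g v u + ε * slack φ v u) ∧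
      0 ≤ g (v + u) - g v - lo v u + ε * (φ (v + u) - φ v) ∧
      0 ≤ hi v u - (g (v + u) - g v) + ε * (φ v - φ (v + u)) := by
    simp only [eventually_all_finset, eventually_imp_distrib_left, eventually_and]
    refine fun v _ u _ ht => ⟨fun hop => ?_, ?_, ?_⟩
    · exact eventually_nonneg_add_mul (hg.slack_nonneg ht hop)
        fun hz => hslack v u ⟨ht, ht.opposite hop, hz⟩
    · exact eventually_nonneg_add_mul (sub_nonneg.2 (hg.mem_Icc ht).1)
        fun hz => sub_nonneg.2 (hlo v u ht (sub_eq_zero.1 hz))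
    · exact eventually_nonneg_add_mul (sub_nonneg.2 (hg.mem_Icc ht).2)
        fun hz => sub_nonneg.2 (hhi v u ht (sub_eq_zero.1 hz).symm)
  filter_upwards [hev] with ε hε
  refine ⟨⟨hg.edgeConvex, fun {v u} ht hop => ?_⟩, fun {v} hv => ?_, ?_, fun {v u} ht => ?_⟩
  · have := (hε v ht.base u ht.dir ht).1 hop
    simp only [slack, Pi.add_apply, Pi.smul_apply, smul_eq_mul] at this ⊢
    linarith
  · simp [hg.eq_zero_of_notMem hv, hout v hv]
  · simp [hg.eq_zero_base, h₀]
  · obtain ⟨-, h₁, h₂⟩ := hε v ht.base u ht.dir ht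
    simp only [Pi.add_apply, Pi.smul_apply, smul_eq_mul, Set.mem_Icc]
    constructor <;> linarith

lemma exists_maximal_mem_extremePoints {ι : Type*} {s : Finset ι} {S : Set (ι → ℝ)}
    (hS : IsCompact S) (hne : S.Nonempty) (hs : ∀ g ∈ S, ∀ i ∉ s, g i = 0) :
    ∃ g ∈ S.extremePoints ℝ, Maximal (· ∈ S) g := by
  set l : (ι → ℝ) →L[ℝ] ℝ := ∑ i ∈ s, ContinuousLinearMap.proj i
  have hl (g : ι → ℝ) : l g = ∑ i ∈ s, g i := by simp [l]
  obtain ⟨x, hx, hmax⟩ := hS.exists_isMaxOn hne l.continuous.continuousOn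
  have hexp : IsExposed ℝ S (l.toExposed S) := ContinuousLinearMap.toExposed.isExposed
  obtain ⟨g, hg⟩ := (hexp.isCompact hS).extremePoints_nonempty ⟨x, hx, hmax⟩
  refine ⟨g, hexp.isExtreme.extremePoints_subset_extremePoints hg, hg.1.1, fun g' hg' hle => ?_⟩
  have hsum : ∑ i ∈ s, g i = ∑ i ∈ s, g' i :=
    le_antisymm (sum_le_sum fun i _ => hle i) (by simpa only [hl] using hg.1.2 g' hg')
  intro i
  by_cases hi : i ∈ s
  · exact ((sum_eq_sum_iff_of_le fun i _ => hle i).1 hsum i hi).ge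
  · rw [hs g hg.1.1 i hi, hs g' hg' i hi]

/-- The edge `v, v + u` is a boundary edge or belongs to a little triangle on which `g₀` is
integral, so that its increment has to be preserved if it is an integer. -/
def IsPinned (V : Finset LPt) (g₀ : LPt → ℝ) (v u : LPt) : Prop :=
  v + u - rot u ∉ V ∨ g₀ (v + u) - g₀ v ∈ ints ∧ g₀ (v + rot u) - g₀ v ∈ ints

/-- The lower bound on the increments of the roundings of `g₀`. -/
def lowerBound (V : Finset LPt) (g₀ : LPt → ℝ) (M : ℤ) (v u : LPt) : ℤ :=
  if IsPinned V g₀ v u then ⌊g₀ (v + u) - g₀ v⌋ else -M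

/-- The upper bound on the increments of the roundings of `g₀`. -/
def upperBound (V : Finset LPt) (g₀ : LPt → ℝ) (M : ℤ) (v u : LPt) : ℤ :=
  if IsPinned V g₀ v u then ⌈g₀ (v + u) - g₀ v⌉ else M

/-- The grid-concave functions that agree with `g₀` up to rounding on the pinned edges. The bound
`M` on the other edges makes them a compact set, and it does not restrict how they can be moved if
it is an integer that is large in comparison with the increments of `g₀`. -/
abbrev IsRounding (V : Finset LPt) (g₀ : LPt → ℝ) (M : ℤ) (v₀ : LPt) (g : LPt → ℝ) : Prop :=
  IsAdmissible V v₀ (lowerBound V g₀ M) (upperBound V g₀ M) g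

section Rounding

variable {g₀ : LPt → ℝ} {M : ℤ}

lemma IsRounding.abs_lt (hg : IsRounding V g₀ M v₀ g) (ht : IsTriangle V v u)
    (hp : IsPinned V g₀ v u) : |g (v + u) - g v| < |g₀ (v + u) - g₀ v| + 1 := by
  obtain ⟨h₁, h₂⟩ := hg.mem_Icc ht
  rw [lowerBound, if_pos hp] at h₁
  rw [upperBound, if_pos hp] at h₂
  rw [_root_.abs_lt]
  constructor
  · linarith [Int.sub_one_lt_floor (g₀ (v + u) - g₀ v), neg_abs_le (g₀ (v + u) - g₀ v)]
  · linarith [Int.ceil_lt_add_one (g₀ (v + u) - g₀ v), le_abs_self (g₀ (v + u) - g₀ v)]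

lemma IsRounding.sub_eq (hg : IsRounding V g₀ M v₀ g) (ht : IsTriangle V v u)
    (hp : IsPinned V g₀ v u) (hi : g₀ (v + u) - g₀ v ∈ ints) :
    g (v + u) - g v = g₀ (v + u) - g₀ v := by
  obtain ⟨n, hn⟩ := mem_ints_iff.1 hi
  obtain ⟨h₁, h₂⟩ := hg.mem_Icc ht
  rw [lowerBound, if_pos hp, hn, Int.floor_intCast] at h₁
  rw [upperBound, if_pos hp, hn, Int.ceil_intCast] at h₂
  exact (le_antisymm h₂ h₁).trans hn.symm

lemma IsRounding.not_isFractional (hg : IsRounding V g₀ M v₀ g) (ht : IsTriangle V v u)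
    (hf : ¬ IsFractional V g₀ v u) : ¬ IsFractional V g v u := by
  have hedge {v u : LPt} (ht : IsTriangle V v u) (hf : ¬ IsFractional V g₀ v u) :
      g (v + u) - g v ∈ ints := by
    have hi := ht.not_isFractional_iff.1 hf
    rw [hg.sub_eq ht (Or.inr hi) hi.1]
    exact hi.1
  have hlast := hedge ht.rotate_twice fun h => hf (by simpa using h.rotate)
  rw [add_neg_cancel_right] at hlast
  exact ht.not_isFractional_iff.2 ⟨hedge ht hf, by simpa using neg_mem hlast⟩

lemma IsRounding.abs_le (hg : IsRounding V g₀ M v₀ g)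
    (hM : ∀ v u, IsTriangle V v u → 2 * (|g₀ (v + u) - g₀ v| + 1) < M) (ht : IsTriangle V v u) :
    |g (v + u) - g v| ≤ M := by
  by_cases hp : IsPinned V g₀ v u
  · linarith [hg.abs_lt ht hp, hM v u ht, abs_nonneg (g₀ (v + u) - g₀ v)]
  · obtain ⟨h₁, h₂⟩ := hg.mem_Icc ht
    rw [lowerBound, if_neg hp, Int.cast_neg] at h₁
    rw [upperBound, if_neg hp] at h₂
    exact _root_.abs_le.2 ⟨h₁, h₂⟩

lemma IsFeasible.eq_of_isPinned (hφ : IsFeasible V g φ) (hg : IsRounding V g₀ M v₀ g)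
    (ht : IsTriangle V v u) (hp : IsPinned V g₀ v u) (hi : g (v + u) - g v ∈ ints) :
    φ (v + u) = φ v := by
  by_contra hne
  have htight := hφ.isTight_of_ne ht hi hne
  have hf := ht.not_isFractional_iff.2 (hp.resolve_left (not_not.2 htight.right.opposite_apex))
  exact hne (hφ.eq_of_not_isFractional ht (hg.not_isFractional ht hf))

lemma IsFeasible.le_of_sub_eq_upperBound (hφ : IsFeasible V g φ) (hg : IsRounding V g₀ M v₀ g)
    (hM : ∀ v u, IsTriangle V v u → 2 * (|g₀ (v + u) - g₀ v| + 1) < M) (ht : IsTriangle V v u)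
    (h : g (v + u) - g v = upperBound V g₀ M v u) : φ (v + u) ≤ φ v := by
  by_cases hp : IsPinned V g₀ v u
  · exact (hφ.eq_of_isPinned hg ht hp ⟨_, h.symm⟩).le
  · have hMi : (M : ℝ) ∈ ints := ⟨M, rfl⟩
    rw [upperBound, if_neg hp] at h
    exact hφ.le_of_sub_eq hg.toGridConcave hMi (fun _ _ => hg.abs_le hM)
      (fun v u ht hout => by linarith [hg.abs_lt ht (Or.inl hout), hM v u ht]) ht h

lemma IsFeasible.le_of_sub_eq_lowerBound (hφ : IsFeasible V g φ) (hg : IsRounding V g₀ M v₀ g)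
    (hM : ∀ v u, IsTriangle V v u → 2 * (|g₀ (v + u) - g₀ v| + 1) < M) (ht : IsTriangle V v u)
    (h : g (v + u) - g v = lowerBound V g₀ M v u) : φ v ≤ φ (v + u) := by
  by_cases hp : IsPinned V g₀ v u
  · exact (hφ.eq_of_isPinned hg ht hp ⟨_, h.symm⟩).ge
  have hop : v + u - rot u ∈ V := by_contra fun hn => hp (Or.inl hn)
  have hMi : (M : ℝ) ∈ ints := ⟨M, rfl⟩
  rw [lowerBound, if_neg hp, Int.cast_neg] at h
  simpa using hφ.le_of_sub_eq hg.toGridConcave hMi (fun _ _ => hg.abs_le hM)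
    (fun v u ht hout => by linarith [hg.abs_lt ht (Or.inl hout), hM v u ht]) (ht.opposite hop)
    (by rw [add_neg_cancel_right, ← neg_sub, h, neg_neg])

open Topology in
lemma IsFeasible.eventually_isRounding (hφ : IsFeasible V g φ) (hg : IsRounding V g₀ M v₀ g)
    (hM : ∀ v u, IsTriangle V v u → 2 * (|g₀ (v + u) - g₀ v| + 1) < M)
    (hout : ∀ v ∉ V, φ v = 0) (h₀ : φ v₀ = 0) :
    ∀ᶠ ε in 𝓝[>] (0 : ℝ), IsRounding V g₀ M v₀ (g + ε • φ) :=
  hg.eventually_add_smul hout h₀ (fun _ _ => hφ.slack_nonneg)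
    (fun _ _ => hφ.le_of_sub_eq_lowerBound hg hM) fun _ _ => hφ.le_of_sub_eq_upperBound hg hM

lemma exists_isRounding (hg₀ : GridConcave V g₀) (M : ℤ)
    (hM : ∀ v u, IsTriangle V v u → 2 * (|g₀ (v + u) - g₀ v| + 1) < M) :
    ∃ g, IsRounding V g₀ M v₀ g := by
  set g : LPt → ℝ := fun v => if v ∈ V then g₀ v - g₀ v₀ else 0
  have hsub {v w : LPt} (hv : v ∈ V) (hw : w ∈ V) : g w - g v = g₀ w - g₀ v := by
    simp only [g, if_pos hv, if_pos hw, sub_sub_sub_cancel_right]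
  refine ⟨g, ⟨hg₀.edgeConvex, fun {v u} ht hop => ?_⟩, fun hv => if_neg hv, by simp [g],
    fun {v u} ht => ?_⟩
  · have := hg₀.slack_nonneg ht hop
    rw [slack] at this ⊢
    linarith [hsub ht.apex ht.base, hsub hop ht.tip]
  · rw [hsub ht.base ht.tip, lowerBound, upperBound]
    split_ifs
    · exact ⟨Int.floor_le _, Int.le_ceil _⟩
    · have := hM v u ht
      rw [Int.cast_neg]
      constructor <;> linarith [neg_abs_le (g₀ (v + u) - g₀ v), le_abs_self (g₀ (v + u) - g₀ v),
        abs_nonneg (g₀ (v + u) - g₀ v)]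

/-- Raising `g` along the spread makes an order-maximal rounding taut. -/
lemma IsRounding.isTaut (hg : IsRounding V g₀ M v₀ g)
    (hM : ∀ v u, IsTriangle V v u → 2 * (|g₀ (v + u) - g₀ v| + 1) < M)
    (h₀ : ∀ x ∈ V, toLex x ≤ toLex v₀) (hmax : Maximal (IsRounding V g₀ M v₀) g) : IsTaut V g where
  toGridConcave := hg.toGridConcave
  spread_eq_zero v := by
    have hev := hg.toGridConcave.isFeasible_spread.eventually_isRounding hg hM
      (fun _ => spread_eq_zero_of_notMem) (spread_eq_zero_of_forall_toLex_le h₀)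
    obtain ⟨ε, hε, hpos⟩ := (hev.and self_mem_nhdsWithin).exists
    have hle := hmax.le_of_ge hε (le_add_of_nonneg_right fun w =>
      mul_nonneg (le_of_lt hpos) (spread_nonneg V g w)) v
    have hprod : ε * spread V g v ≤ 0 := by simpa using hle
    exact le_antisymm (nonpos_of_mul_nonpos_right hprod hpos) (spread_nonneg V g v)

lemma IsTaut.not_isFractional (ht : IsTaut V g) (hg : IsRounding V g₀ M v₀ g)
    (hM : ∀ v u, IsTriangle V v u → 2 * (|g₀ (v + u) - g₀ v| + 1) < M)
    (hext : g ∈ Set.extremePoints ℝ {g | IsRounding V g₀ M v₀ g}) (v u : LPt) :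
    ¬ IsFractional V g v u := fun hf => by
  obtain ⟨δ, h₀, ⟨w, -, hw⟩, hout, hslack, hfix, hint⟩ := ht.exists_direction hf v₀
  have hneg (v u : LPt) : slack (-δ) v u = -slack δ v u := by
    simp only [slack, Pi.neg_apply]
    ring
  have hev := IsFeasible.eventually_isRounding (φ := δ) ⟨fun h => (hslack _ _ h).ge, hfix _ _,
    hint _ _⟩ hg hM hout h₀
  have hev' := IsFeasible.eventually_isRounding (φ := -δ)
    ⟨fun h => by rw [hneg, hslack _ _ h, neg_zero], fun h hi => congrArg Neg.neg (hfix _ _ h hi),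
      fun h hi => congrArg Neg.neg (hint _ _ h hi)⟩ hg hM
    (fun v hv => neg_eq_zero.2 (hout v hv)) (neg_eq_zero.2 h₀)
  obtain ⟨ε, ⟨hε, hε'⟩, hpos⟩ := ((hev.and hev').and self_mem_nhdsWithin).exists
  have hmid : g ∈ openSegment ℝ (g + ε • δ) (g + ε • -δ) :=
    ⟨1 / 2, 1 / 2, by norm_num, by norm_num, by norm_num, by module⟩
  have hzero := congrFun (hext.2 hε hε' hmid) w
  exact mul_ne_zero (ne_of_gt hpos) hw (by simpa using hzero)

end Rounding

theorem GridConcave.exists_integral {g₀ : LPt → ℝ} (hg₀ : GridConcave V g₀) :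
    ∃ g, GridConcave V g ∧ (∀ v u, IsTriangle V v u → g (v + u) - g v ∈ ints) ∧
      ∀ v u, IsTriangle V v u → IsPinned V g₀ v u → g₀ (v + u) - g₀ v ∈ ints →
        g (v + u) - g v = g₀ (v + u) - g₀ v := by
  by_cases hT : ∃ v u, IsTriangle V v u
  swap
  · exact ⟨g₀, hg₀, fun v u h => absurd ⟨v, u, h⟩ hT, fun _ _ _ _ _ => rfl⟩
  obtain ⟨v, u, ht⟩ := hT
  obtain ⟨v₀, h₀, hlast⟩ := exists_max_image V toLex ⟨v, ht.base⟩
  obtain ⟨B, hB⟩ := ((V ×ˢ dirs).image fun e => 2 * (|g₀ (e.1 + e.2) - g₀ e.1| + 1)).bddAbove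
  have hM (v u : LPt) (h : IsTriangle V v u) :
      2 * (|g₀ (v + u) - g₀ v| + 1) < (⌊B⌋ + 1 : ℤ) := by
    push_cast
    exact (hB (mem_coe.2 (mem_image_of_mem _ (mk_mem_product h.base h.dir)))).trans_lt
      (Int.lt_floor_add_one B)
  obtain ⟨g, hext, hmax⟩ := exists_maximal_mem_extremePoints
    (isCompact_setOf_isAdmissible hg₀.edgeConvex h₀ ht _ _) (exists_isRounding hg₀ _ hM)
    fun g hg _ => hg.eq_zero_of_notMem
  have hg : IsRounding V g₀ (⌊B⌋ + 1) v₀ g := hext.1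
  have hint := (hg.isTaut hM hlast hmax).not_isFractional hg hM hext
  exact ⟨g, hg.toGridConcave, fun v u h => (h.not_isFractional_iff.1 (hint v u)).1,
    fun _ _ => hg.sub_eq⟩

end Extremal

/-! ### Convex grids as point sets of the triangular lattice -/

section Heights

variable {o q : Pt} {p : ℝ × ℝ} {v u w x : LPt}

/-- The point of the plane with lattice coordinates `x` relative to the origin `o`. -/
def latticePoint (o : Pt) (x : LPt) : Pt := o + ((x.1 : ℝ) • xiv 0 + (x.2 : ℝ) • xiv 1)

/-- The linear functional on the plane with values `p.1` and `p.2` at `ξ₁` and `ξ₂`. -/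
def planeLin (p : ℝ × ℝ) : Pt →ₗ[ℝ] ℝ :=
  p.1 • LinearMap.fst ℝ ℝ ℝ + ((p.1 / 2 + p.2) * (2 / √3)) • LinearMap.snd ℝ ℝ ℝ

/-- The affine functional with gradient `p` in lattice coordinates and value `c` at the lattice
point `v`. -/
def affineAt (o : Pt) (p : ℝ × ℝ) (v : LPt) (c : ℝ) : Pt →ᵃ[ℝ] ℝ :=
  (planeLin p).toAffineMap + AffineMap.const ℝ Pt (c - planeLin p (latticePoint o v))

/-- The signed distance to the left of the line through `v` and `v + u`, in units of the height of
a little triangle. -/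
def height (o : Pt) (v u : LPt) : Pt →ᵃ[ℝ] ℝ := affineAt o (-u.2, u.1) v 0

lemma planeLin_xiv_zero : planeLin p (xiv 0) = p.1 := by simp [planeLin, xiv]

lemma planeLin_xiv_one : planeLin p (xiv 1) = p.2 := by
  simp only [planeLin, xiv, LinearMap.add_apply, LinearMap.smul_apply, LinearMap.fst_apply,
    LinearMap.snd_apply, smul_eq_mul]
  field_simp
  ring

lemma planeLin_latticePoint_sub :
    planeLin p (latticePoint o x - latticePoint o v) = lin p (x - v) := by
  rw [latticePoint, latticePoint, add_sub_add_left_eq_sub, map_sub, map_add, map_add, map_smul,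
    map_smul, map_smul, map_smul, planeLin_xiv_zero, planeLin_xiv_one, map_sub, lin_apply,
    lin_apply]
  simp only [smul_eq_mul]
  ring

lemma affineAt_apply (c : ℝ) : affineAt o p v c q = c + planeLin p (q - latticePoint o v) := by
  rw [map_sub]
  simp only [affineAt, AffineMap.coe_add, Pi.add_apply, LinearMap.coe_toAffineMap,
    AffineMap.const_apply]
  ring

lemma affineAt_latticePoint (c : ℝ) : affineAt o p v c (latticePoint o x) = c + lin p (x - v) := by
  rw [affineAt_apply, planeLin_latticePoint_sub]

lemma latticePoint_injective (o : Pt) : Function.Injective (latticePoint o) := by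
  intro x y h
  have hlin (p : ℝ × ℝ) : lin p (x - y) = 0 := by
    rw [← planeLin_latticePoint_sub, h, sub_self, map_zero]
  have h₁ := hlin (1, 0)
  have h₂ := hlin (0, 1)
  simp only [lin_apply, Prod.fst_sub, Prod.snd_sub, one_mul, zero_mul, add_zero, zero_add,
    Int.cast_eq_zero, sub_eq_zero] at h₁ h₂
  exact Prod.ext h₁ h₂

lemma height_latticePoint : height o v u (latticePoint o x) = cross u (x - v) := by
  rw [height, affineAt_latticePoint, lin_apply, cross_apply]
  push_cast
  ring

lemma height_eq_add_cross : height o v u q = height o w u q + cross u (w - v) := by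
  rw [← height_latticePoint (o := o), height, height, affineAt_apply, affineAt_apply,
    affineAt_apply, add_add_add_comm, ← map_add, sub_add_sub_cancel]
  simp

lemma height_add : height o v (u + w) q = height o v u q + height o v w q := by
  simp only [height, affineAt_apply, planeLin, LinearMap.add_apply, LinearMap.smul_apply,
    LinearMap.fst_apply, LinearMap.snd_apply, smul_eq_mul, Prod.fst_add, Prod.snd_add]
  push_cast
  ring

lemma height_neg : height o v (-u) q = -height o v u q := by
  have h := height_add (o := o) (v := v) (u := u) (w := -u) (q := q)
  have h₀ : height o v 0 q = 0 := by simp [height, affineAt_apply, planeLin]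
  rw [add_neg_cancel, h₀] at h
  linarith

lemma height_add_height_add_height (hu : u ∈ dirs) (v : LPt) (q : Pt) :
    height o v u q + height o (v + u) (rot u - u) q + height o (v + rot u) (-rot u) q = 1 := by
  have h : height o v (u + (rot u - u)) q = height o v (rot u) q := by rw [add_sub_cancel]
  have hc : cross (rot u - u) (v - (v + u)) = 1 := by
    rw [sub_add_cancel_left, map_neg, map_sub, AddMonoidHom.sub_apply, cross_self, sub_zero,
      ← cross_rot hu, cross_apply, cross_apply]
    ring
  have hc' : cross (-rot u) (v - (v + rot u)) = 0 := by
    rw [sub_add_cancel_left, map_neg, map_neg, AddMonoidHom.neg_apply, cross_self, neg_zero,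
      neg_zero]
  rw [height_eq_add_cross (w := v) (v := v + u), height_eq_add_cross (w := v) (v := v + rot u),
    hc, hc', height_neg]
  rw [height_add] at h
  push_cast
  linarith

end Heights

section Cells

/-- The three vertices of a little triangle of a grid. -/
def corners (T : GridTriangle) : Finset Pt := {T.v0, T.v1, T.v2}

/-- The origin of the lattice coordinates of a grid. -/
def origin (G : ConvexGrid) : Pt := G.nonempty.choose.base

/-- The point of the plane with lattice coordinates `x` relative to the origin of `G`. -/
def node (G : ConvexGrid) (x : LPt) : Pt := latticePoint (origin G) x

lemma node_injective (G : ConvexGrid) : Function.Injective (node G) :=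
  latticePoint_injective _

/-- The vertices of a grid in lattice coordinates. -/
def vertices (G : ConvexGrid) : Finset LPt :=
  (G.tris.biUnion corners).preimage (node G) (node_injective G).injOn

/-- The little triangle `T` of `G` has the vertices `v, v + u, v + rot u` in lattice
coordinates. -/
structure IsCell (G : ConvexGrid) (T : GridTriangle) (v u : LPt) : Prop where
  mem : T ∈ G.tris
  dir : u ∈ dirs
  corners_eq : corners T = {node G v, node G (v + u), node G (v + rot u)}

/-- The point `q` lies strictly inside the lattice triangle `v, v + u, v + rot u`. -/
structure IsInside (o q : Pt) (v u : LPt) : Prop where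
  dir : u ∈ dirs
  height_pos : 0 < height o v u q
  height_pos' : 0 < height o (v + u) (rot u - u) q
  height_pos'' : 0 < height o (v + rot u) (-rot u) q

variable {G : ConvexGrid} {T : GridTriangle} {q : Pt} {v u c d x : LPt}

lemma node_add (x d : LPt) :
    node G (x + d) = node G x + ((d.1 : ℝ) • xiv 0 + (d.2 : ℝ) • xiv 1) := by
  simp only [node, latticePoint, Prod.fst_add, Prod.snd_add, Int.cast_add, add_smul]
  abel

lemma exists_node_eq_base (hT : T ∈ G.tris) : ∃ c, T.base = node G c := by
  obtain ⟨m, n, h⟩ := G.aligned T hT _ G.nonempty.choose_spec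
  exact ⟨(m, n), sub_eq_iff_eq_add'.1 h⟩

lemma mem_vertices_iff : x ∈ vertices G ↔ ∃ T ∈ G.tris, node G x ∈ corners T := by
  rw [vertices, mem_preimage, mem_biUnion]

lemma IsInside.rotate {o : Pt} (h : IsInside o q v u) :
    IsInside o q (v + u) (rot u - u) where
  dir := rot_sub_mem_dirs h.dir
  height_pos := h.height_pos'
  height_pos' := by simpa using h.height_pos''
  height_pos'' := by simpa using h.height_pos

lemma IsInside.height_lt_one {o : Pt} (h : IsInside o q v u) : height o v u q < 1 := by
  linarith [height_add_height_add_height (o := o) h.dir v q, h.height_pos', h.height_pos'']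

lemma IsCell.rotate (h : IsCell G T v u) : IsCell G T (v + u) (rot u - u) where
  mem := h.mem
  dir := rot_sub_mem_dirs h.dir
  corners_eq := by
    have h₁ : v + u + (rot u - u) = v + rot u := by abel
    have h₂ : v + u + rot (rot u - u) = v := by simp
    rw [h₁, h₂, h.corners_eq]
    ext
    simp only [mem_insert, mem_singleton]
    tauto

lemma IsCell.rotate_twice (h : IsCell G T v u) : IsCell G T (v + rot u) (-rot u) := by
  simpa using h.rotate.rotate

lemma IsCell.node_mem_corners (h : IsCell G T v u) : node G v ∈ corners T := by
  simp [h.corners_eq]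

lemma IsCell.mem_vertices (h : IsCell G T v u) : v ∈ vertices G :=
  mem_vertices_iff.2 ⟨T, h.mem, h.node_mem_corners⟩

lemma IsCell.isTriangle (h : IsCell G T v u) : IsTriangle (vertices G) v u where
  dir := h.dir
  base := h.mem_vertices
  tip := h.rotate.mem_vertices
  apex := h.rotate_twice.mem_vertices

lemma exists_isCell (hT : T ∈ G.tris) : ∃ v u, IsCell G T v u := by
  obtain ⟨c, hc⟩ := exists_node_eq_base hT
  have h₀ : T.v0 = node G c := hc
  have h₁ : T.v1 = node G (c + (1, 0)) := by
    rw [node_add, GridTriangle.v1, hc]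
    simp
  cases hup : T.up
  · have h₂ : T.v2 = node G (c + (0, -1)) := by
      rw [node_add, GridTriangle.v2, hc, hup]
      ext <;> simp [xiv]; ring
    refine ⟨c, (0, -1), hT, by simp [dirs], ?_⟩
    rw [corners, h₀, h₁, h₂, pair_comm (node G (c + (1, 0)))]
    rfl
  · have h₂ : T.v2 = node G (c + (1, 1)) := by
      rw [node_add, GridTriangle.v2, hc, hup]
      ext <;> simp [xiv]; ring
    exact ⟨c, (1, 0), hT, by simp [dirs], by rw [corners, h₀, h₁, h₂]; rfl⟩

lemma region_eq_convexHull : T.region = convexHull ℝ (corners T : Set Pt) := by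
  simp [corners, GridTriangle.region]

lemma corners_subset_region : (corners T : Set Pt) ⊆ T.region :=
  region_eq_convexHull ▸ subset_convexHull ℝ _

lemma convex_region : Convex ℝ T.region := convex_convexHull ℝ _

lemma region_subset_region (hT : T ∈ G.tris) : T.region ⊆ G.region :=
  Set.subset_biUnion_of_mem (u := GridTriangle.region) hT

lemma node_mem_region (hx : x ∈ vertices G) : node G x ∈ G.region := by
  obtain ⟨T, hT, hxT⟩ := mem_vertices_iff.1 hx
  exact region_subset_region hT (corners_subset_region hxT)

lemma nonneg_of_mem_region {φ : Pt →ᵃ[ℝ] ℝ} (h : ∀ y ∈ corners T, 0 ≤ φ y) (hq : q ∈ T.region) :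
    0 ≤ φ q :=
  convexHull_min (s := (corners T : Set Pt)) h ((convex_Ici 0).affine_preimage φ)
    (region_eq_convexHull ▸ hq)

lemma IsCell.height_nonneg (h : IsCell G T v u) (hq : q ∈ T.region) :
    0 ≤ height (origin G) v u q := by
  refine nonneg_of_mem_region (fun y hy => ?_) hq
  rw [h.corners_eq] at hy
  simp only [mem_insert, mem_singleton] at hy
  rcases hy with rfl | rfl | rfl <;> rw [node, height_latticePoint]
  · simp
  · simp
  · simp [cross_rot h.dir]

lemma IsCell.height_le_one (h : IsCell G T v u) (hq : q ∈ T.region) :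
    height (origin G) v u q ≤ 1 := by
  linarith [height_add_height_add_height (o := origin G) h.dir v q, h.rotate.height_nonneg hq,
    h.rotate_twice.height_nonneg hq]

lemma IsCell.cross_eq_zero (h : IsCell G T c u) (hq : q ∈ T.region)
    (hin : IsInside (origin G) q v u) : cross u (c - v) = 0 := by
  have heq := height_eq_add_cross (o := origin G) (v := v) (u := u) (w := c) (q := q)
  have h₁ : (-1 : ℝ) < cross u (c - v) := by linarith [hin.height_pos, h.height_le_one hq]
  have h₂ : (cross u (c - v) : ℝ) < 1 := by linarith [hin.height_lt_one, h.height_nonneg hq]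
  norm_cast at h₁ h₂
  omega

lemma IsCell.cross_eq_one (h : IsCell G T c (-u)) (hq : q ∈ T.region)
    (hin : IsInside (origin G) q v u) : cross u (c - v) = 1 := by
  have heq := height_eq_add_cross (o := origin G) (v := v) (u := u) (w := c) (q := q)
  have hnonneg := h.height_nonneg hq
  have hle := h.height_le_one hq
  rw [height_neg] at hnonneg hle
  have h₁ : (0 : ℝ) < cross u (c - v) := by linarith [hin.height_pos]
  have h₂ : (cross u (c - v) : ℝ) < 2 := by linarith [hin.height_lt_one]
  norm_cast at h₁ h₂
  omega

lemma IsCell.eq_of_isInside (h : IsCell G T c u) (hq : q ∈ T.region)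
    (hin : IsInside (origin G) q v u) : c = v := by
  have h₁ := h.cross_eq_zero hq hin
  have h₂ := h.rotate.cross_eq_zero hq hin.rotate
  rw [add_sub_add_right_eq_sub] at h₂
  rw [← sub_eq_zero]
  generalize c - v = x at h₁ h₂
  rcases mem_dirs.1 h.dir with rfl | rfl | rfl | rfl | rfl | rfl <;>
    simp [rot_apply, cross_apply, Prod.ext_iff] at h₁ h₂ ⊢ <;> omega

-- The three relations add up to `0 = 1`, since the sides of a triangle add up to zero.
lemma IsCell.not_isInside_of_neg (h : IsCell G T c (-u)) (hq : q ∈ T.region) :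
    ¬ IsInside (origin G) q v u := fun hin => by
  have hflip : rot (-u) - -u = -(rot u - u) := by rw [map_neg]; abel
  have h₁ := h.cross_eq_one hq hin
  have h₂ := (hflip ▸ h.rotate).cross_eq_one hq hin.rotate
  have htwice : IsCell G T (c - rot u) (- -rot u) := by
    simpa [sub_eq_add_neg] using h.rotate_twice
  have h₃ := htwice.cross_eq_one hq (v := v + rot u) (by simpa using hin.rotate.rotate)
  rcases mem_dirs.1 hin.dir with rfl | rfl | rfl | rfl | rfl | rfl <;>
    simp [rot_apply, cross_apply] at h₁ h₂ h₃ <;> omega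

lemma IsCell.exists_eq_or_eq_neg (h : IsCell G T c d) (hu : u ∈ dirs) :
    ∃ v, IsCell G T v u ∨ IsCell G T v (-u) := by
  have hdir : (d = u ∨ d = -u) ∨ (rot d - d = u ∨ rot d - d = -u) ∨
      (-rot d = u ∨ -rot d = -u) := by
    rcases mem_dirs.1 h.dir with rfl | rfl | rfl | rfl | rfl | rfl <;>
    rcases mem_dirs.1 hu with rfl | rfl | rfl | rfl | rfl | rfl <;> simp [rot_apply]
  rcases hdir with hd | hd | hd
  · exact ⟨_, hd.imp (· ▸ h) (· ▸ h)⟩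
  · exact ⟨_, hd.imp (· ▸ h.rotate) (· ▸ h.rotate)⟩
  · exact ⟨_, hd.imp (· ▸ h.rotate_twice) (· ▸ h.rotate_twice)⟩

lemma IsInside.exists_isCell (h : IsInside (origin G) q v u) (hq : q ∈ G.region) :
    ∃ T, IsCell G T v u := by
  obtain ⟨T, hT, hqT⟩ := Set.mem_iUnion₂.1 hq
  obtain ⟨c, d, hcell⟩ := TriLattice.exists_isCell hT
  obtain ⟨c, hcell | hcell⟩ := hcell.exists_eq_or_eq_neg h.dir
  · exact ⟨T, hcell.eq_of_isInside hqT h ▸ hcell⟩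
  · exact absurd h (hcell.not_isInside_of_neg hqT)

end Cells

section Correspondence

variable {G : ConvexGrid} {T : GridTriangle} {e : Ed} {f : Pt → ℝ} {g k : LPt → ℝ}
  {y z : Pt} {v u w d x : LPt}

lemma height_node (w d x : LPt) : height (origin G) w d (node G x) = cross d (x - w) :=
  height_latticePoint

lemma exists_isCell_of_isTriangle (h : IsTriangle (vertices G) v u) : ∃ T, IsCell G T v u := by
  have hmem : midpoint ℝ (midpoint ℝ (node G v) (node G (v + u))) (node G (v + rot u)) ∈
      G.region :=
    G.convex.midpoint_mem (G.convex.midpoint_mem (node_mem_region h.base) (node_mem_region h.tip))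
      (node_mem_region h.apex)
  have hrot := cross_rot_self h.dir
  have hrot' := cross_rot h.dir
  refine IsInside.exists_isCell ⟨h.dir, ?_, ?_, ?_⟩ hmem <;>
    rw [AffineMap.map_midpoint, AffineMap.map_midpoint, height_node, height_node, height_node] <;>
    simp [midpoint_eq_smul_add, hrot, hrot']

-- On the segment from the midpoint of the side to `x`, points near the midpoint lie strictly inside
-- the little triangle beyond that side.
open Filter Topology in
lemma edgeConvex_vertices (G : ConvexGrid) : EdgeConvex (vertices G) := fun v u x h hx hneg => by
  set m := midpoint ℝ (node G v) (node G (v + u)) with hm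
  have hheight (w d : LPt) : height (origin G) w d m =
      ((cross d (v - w) : ℝ) + cross d (v + u - w)) / 2 := by
    rw [hm, AffineMap.map_midpoint, height_node, height_node, midpoint_eq_smul_add, smul_eq_mul]
    simp only [invOf_eq_inv]
    ring
  have hpos {w d : LPt} (hlt : 0 < height (origin G) w d m) :
      ∀ᶠ ε in 𝓝[>] (0 : ℝ), 0 < height (origin G) w d (AffineMap.lineMap m (node G x) ε) := by
    simp only [AffineMap.apply_lineMap]
    refine (AffineMap.lineMap_continuous.continuousWithinAt.eventually_const_lt ?_)
    rwa [AffineMap.lineMap_apply_zero]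
  have hrot := cross_rot_self h.dir
  have hev := (hpos (w := v) (d := u - rot u) (by rw [hheight]; simp [hrot])).and
    (hpos (w := v + u - rot u) (d := rot u) (by rw [hheight]; simp [hrot]))
  obtain ⟨ε, ⟨h₁, h₂⟩, hε₀, hε₁⟩ := (hev.and (Ioo_mem_nhdsGT one_pos)).exists
  have hmem : AffineMap.lineMap m (node G x) ε ∈ G.region :=
    G.convex.lineMap_mem (G.convex.midpoint_mem (node_mem_region h.base) (node_mem_region h.tip))
      (node_mem_region hx) ⟨hε₀.le, hε₁.le⟩
  have hin : IsInside (origin G) (AffineMap.lineMap m (node G x) ε) (v + u) (-u) := by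
    refine ⟨neg_mem_dirs h.dir, ?_, by simpa [add_comm, ← sub_eq_add_neg] using h₁,
      by simpa [← sub_eq_add_neg] using h₂⟩
    rw [AffineMap.apply_lineMap, hheight, height_node, AffineMap.lineMap_apply_ring,
      ← sub_sub x, map_sub (cross (-u))]
    have hlt : (cross u x : ℝ) < cross u v := by
      rw [map_sub, sub_neg] at hneg
      exact_mod_cast hneg
    simpa using mul_pos hε₀ (sub_pos.2 hlt)
  obtain ⟨T, hT⟩ := hin.exists_isCell hmem
  exact hT.isTriangle.opposite_apex

lemma gridConcave_comp_node (hconc : ConcaveOn ℝ G.region f)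
    (haff : ∀ T ∈ G.tris, AffineOn f T.region) : GridConcave (vertices G) (f ∘ node G) where
  edgeConvex := edgeConvex_vertices G
  slack_nonneg {v u} ht hx := by
    obtain ⟨T, hT⟩ := exists_isCell_of_isTriangle ht
    obtain ⟨φ, hφ⟩ := haff T hT.mem
    have hv := corners_subset_region hT.node_mem_corners
    have hvu := corners_subset_region hT.rotate.node_mem_corners
    have hmid : midpoint ℝ (node G (v + rot u)) (node G (v + u - rot u)) =
        midpoint ℝ (node G v) (node G (v + u)) := by
      rw [midpoint_eq_smul_add, midpoint_eq_smul_add, add_sub_assoc]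
      simp only [node_add, Prod.fst_sub, Prod.snd_sub, Int.cast_sub, sub_smul]
      abel_nf
    have hφmid : f (midpoint ℝ (node G v) (node G (v + u))) =
        (f (node G v) + f (node G (v + u))) / 2 := by
      rw [hφ _ (convex_region.midpoint_mem hv hvu), AffineMap.map_midpoint, hφ _ hv, hφ _ hvu,
        midpoint_eq_smul_add, smul_eq_mul, invOf_eq_inv]
      ring
    have half_nonneg : (0 : ℝ) ≤ ⅟2 := by norm_num
    have hle := hconc.2 (node_mem_region ht.apex) (node_mem_region hx) half_nonneg half_nonneg
      (invOf_two_add_invOf_two (R := ℝ))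
    rw [← smul_add, ← smul_add, ← midpoint_eq_smul_add, ← midpoint_eq_smul_add, hmid, hφmid,
      midpoint_eq_smul_add] at hle
    simp only [invOf_eq_inv, smul_eq_mul] at hle
    simp only [slack, Function.comp_apply]
    linarith

lemma exists_affine_of_mem (hk : GridConcave (vertices G) k) (hT : T ∈ G.tris) :
    ∃ φ : Pt →ᵃ[ℝ] ℝ, (∀ x ∈ vertices G, k x ≤ φ (node G x)) ∧
      ∀ x, node G x ∈ corners T → φ (node G x) = k x := by
  obtain ⟨v, u, h⟩ := exists_isCell hT
  obtain ⟨p, hp⟩ := h.isTriangle.exists_hasSlope k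
  have hφ (x : LPt) : affineAt (origin G) p v (k v) (node G x) = k v + lin p (x - v) :=
    affineAt_latticePoint _
  refine ⟨affineAt (origin G) p v (k v), fun x hx => (hk.le_affine hp hx).trans_eq (hφ x).symm,
    fun x hx => ?_⟩
  rw [hφ]
  simp only [h.corners_eq, mem_insert, mem_singleton, (node_injective G).eq_iff] at hx
  rcases hx with rfl | rfl | rfl
  · simp
  · rw [add_sub_cancel_left, ← hp.slope_tip, add_sub_cancel]
  · rw [add_sub_cancel_left, ← hp.slope_apex, add_sub_cancel]

lemma exists_eq_node (hT : T ∈ G.tris) (hy : y ∈ corners T) :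
    ∃ x ∈ vertices G, y = node G x := by
  obtain ⟨v, u, h⟩ := exists_isCell hT
  simp only [h.corners_eq, mem_insert, mem_singleton] at hy
  rcases hy with rfl | rfl | rfl
  exacts [⟨_, h.mem_vertices, rfl⟩, ⟨_, h.rotate.mem_vertices, rfl⟩,
    ⟨_, h.rotate_twice.mem_vertices, rfl⟩]

-- The extension is the minimum of the affine functions interpolating `k` on the little triangles.
lemma exists_concaveOn_extension (hk : GridConcave (vertices G) k) :
    ∃ f : Pt → ℝ, ConcaveOn ℝ G.region f ∧ (∀ T ∈ G.tris, AffineOn f T.region) ∧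
      ∀ x ∈ vertices G, f (node G x) = k x := by
  choose! φ hle heq using fun T (hT : T ∈ G.tris) => exists_affine_of_mem hk hT
  have hφ {S T : GridTriangle} (hS : S ∈ G.tris) (hT : T ∈ G.tris) {q : Pt}
      (hq : q ∈ T.region) : φ T q ≤ φ S q := by
    refine sub_nonneg.1 (nonneg_of_mem_region (φ := φ S - φ T) (fun y hy => ?_) hq)
    obtain ⟨x, hx, rfl⟩ := exists_eq_node hT hy
    exact sub_nonneg.2 ((heq T hT x hy).trans_le (hle S hS x hx))
  have hf {T : GridTriangle} (hT : T ∈ G.tris) {q : Pt} (hq : q ∈ T.region) :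
      G.tris.inf' G.nonempty (fun S => φ S q) = φ T q :=
    le_antisymm (inf'_le _ hT) (le_inf' _ _ fun S hS => hφ hS hT hq)
  refine ⟨fun q => G.tris.inf' G.nonempty fun S => φ S q, ?_, fun T hT => ⟨φ T, fun q => hf hT⟩,
    fun x hx => ?_⟩
  · simp only [← Finset.inf'_apply]
    refine inf'_induction G.nonempty _ (p := ConcaveOn ℝ G.region) (fun _ h _ h' => h.inf h') ?_
    exact fun S _ => ((concaveOn_id convex_univ).comp_affineMap (φ S)).subset
      (Set.subset_univ _) G.convex
  · obtain ⟨T, hT, hxT⟩ := mem_vertices_iff.1 hx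
    exact (hf hT (corners_subset_region hxT)).trans (heq T hT x hxT)

/-! ### Edges of a grid -/

lemma exists_eq_add_xiv (he : e ∈ T.edgeFinset) : ∃ i, e.2 = e.1 + xiv i := by
  simp only [GridTriangle.edgeFinset, mem_insert, mem_singleton] at he
  rcases he with rfl | rfl | rfl
  · exact ⟨0, rfl⟩
  all_goals
    simp only [GridTriangle.e1, GridTriangle.e2, GridTriangle.v0, GridTriangle.v1, GridTriangle.v2]
  · split_ifs
    exacts [⟨1, rfl⟩, ⟨2, rfl⟩]
  · split_ifs
    · exact ⟨2, by ext <;> simp [xiv]; ring⟩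
    · exact ⟨1, by ext <;> simp [xiv]; ring⟩

lemma xiv_add_xiv_ne_zero (i j : Fin 3) : xiv i + xiv j ≠ 0 := fun h => by
  have h₁ := congrArg Prod.fst h
  fin_cases i <;> fin_cases j <;> norm_num [xiv] at h₁

lemma fst_mem_corners (he : e ∈ T.edgeFinset) : e.1 ∈ corners T := by
  simp only [GridTriangle.edgeFinset, mem_insert, mem_singleton] at he
  rcases he with rfl | rfl | rfl <;>
    simp [corners, GridTriangle.e0, GridTriangle.e1, GridTriangle.e2]

lemma snd_mem_corners (he : e ∈ T.edgeFinset) : e.2 ∈ corners T := by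
  simp only [GridTriangle.edgeFinset, mem_insert, mem_singleton] at he
  rcases he with rfl | rfl | rfl <;>
    simp [corners, GridTriangle.e0, GridTriangle.e1, GridTriangle.e2]

lemma fst_ne_snd (he : e ∈ T.edgeFinset) : e.1 ≠ e.2 := by
  obtain ⟨i, hi⟩ := exists_eq_add_xiv he
  rw [hi, ne_comm, Ne, add_eq_left]
  intro h
  exact xiv_add_xiv_ne_zero i i (by simp [h])

lemma exists_mem_edgeFinset (hy : y ∈ corners T) (hz : z ∈ corners T) (hne : y ≠ z) :
    ∃ e ∈ T.edgeFinset, s(e.1, e.2) = s(y, z) := by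
  simp only [corners, mem_insert, mem_singleton] at hy hz
  rcases hy with rfl | rfl | rfl <;> rcases hz with rfl | rfl | rfl <;>
    simp_all [GridTriangle.edgeFinset, GridTriangle.e0, GridTriangle.e1, GridTriangle.e2]

lemma exists_isCell_of_mem_edgeFinset (hT : T ∈ G.tris) (he : e ∈ T.edgeFinset) :
    ∃ v u, IsCell G T v u ∧ s(e.1, e.2) = s(node G v, node G (v + u)) := by
  obtain ⟨v, u, h⟩ := exists_isCell hT
  have h₁ := fst_mem_corners he
  have h₂ := snd_mem_corners he
  have hne := fst_ne_snd he
  have hcases : s(e.1, e.2) = s(node G v, node G (v + u)) ∨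
      s(e.1, e.2) = s(node G (v + u), node G (v + rot u)) ∨
      s(e.1, e.2) = s(node G (v + rot u), node G v) := by
    simp only [h.corners_eq, mem_insert, mem_singleton] at h₁ h₂
    rcases h₁ with h₁ | h₁ | h₁ <;> rcases h₂ with h₂ | h₂ | h₂ <;> simp_all
  rcases hcases with hs | hs | hs
  · exact ⟨_, _, h, hs⟩
  · exact ⟨_, _, h.rotate, by simpa using hs⟩
  · exact ⟨_, _, h.rotate_twice, by simpa using hs⟩

end Correspondence

section Edges

variable {G : ConvexGrid} {T : GridTriangle} {e : Ed} {f k : Pt → ℝ} {y z : Pt} {v u : LPt}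

lemma eq_of_mem_edgeFinset {S : GridTriangle} {e' : Ed} (he : e ∈ S.edgeFinset)
    (he' : e' ∈ T.edgeFinset) (hs : s(e.1, e.2) = s(e'.1, e'.2)) : e = e' := by
  obtain ⟨h₁, h₂⟩ | ⟨h₁, h₂⟩ := Sym2.eq_iff.1 hs
  · exact Prod.ext h₁ h₂
  · obtain ⟨i, hi⟩ := exists_eq_add_xiv he
    obtain ⟨j, hj⟩ := exists_eq_add_xiv he'
    rw [← h₁, ← h₂, hi, add_assoc, left_eq_add] at hj
    exact absurd hj (xiv_add_xiv_ne_zero i j)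

lemma eq_of_mem_boundary {S : GridTriangle} (he : e ∈ G.boundary) (hS : S ∈ G.tris)
    (heS : e ∈ S.edgeFinset) (hT : T ∈ G.tris) (heT : e ∈ T.edgeFinset) : S = T :=
  card_le_one.1 (mem_filter.1 he).2.le S (mem_filter.2 ⟨hS, heS⟩) T (mem_filter.2 ⟨hT, heT⟩)

lemma IsCell.opposite_notMem (h : IsCell G T v u) (he : e ∈ G.boundary) (heT : e ∈ T.edgeFinset)
    (hs : s(e.1, e.2) = s(node G v, node G (v + u))) : v + u - rot u ∉ vertices G := fun hx => by
  obtain ⟨S, hS⟩ := exists_isCell_of_isTriangle (h.isTriangle.opposite hx)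
  have hv : node G v ∈ corners S := by simpa using hS.rotate.node_mem_corners
  have hne : node G v ≠ node G (v + u) := fun heq =>
    fst_ne_snd heT (Sym2.mk_isDiag_iff.1 (hs ▸ Sym2.mk_isDiag_iff.2 heq))
  obtain ⟨e', heS, hs'⟩ := exists_mem_edgeFinset hv hS.node_mem_corners hne
  rw [← eq_of_mem_edgeFinset heT heS (hs.trans hs'.symm)] at heS
  have hST := eq_of_mem_boundary he hS.mem heS h.mem heT
  have happex := hST ▸ hS.rotate_twice.node_mem_corners
  simp only [h.corners_eq, mem_insert, mem_singleton, (node_injective G).eq_iff] at happex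
  have hcross := cross_rot h.dir
  rcases happex with heq | heq | heq <;>
    have := congrArg (cross u) heq <;> simp [hcross] at this

lemma sub_mem_ints_iff (hs : s(e.1, e.2) = s(y, z)) :
    f e.2 - f e.1 ∈ ints ↔ f z - f y ∈ ints := by
  obtain ⟨h₁, h₂⟩ | ⟨h₁, h₂⟩ := Sym2.eq_iff.1 hs
  · rw [h₁, h₂]
  · rw [h₁, h₂, ← neg_mem_iff, neg_sub]

lemma sub_eq_sub_iff_of_mk_eq (hs : s(e.1, e.2) = s(y, z)) :
    f e.2 - f e.1 = k e.2 - k e.1 ↔ f z - f y = k z - k y := by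
  obtain ⟨h₁, h₂⟩ | ⟨h₁, h₂⟩ := Sym2.eq_iff.1 hs
  · rw [h₁, h₂]
  · rw [h₁, h₂, ← neg_inj, neg_sub, neg_sub]

lemma IsCell.isPinned_of_sub_mem_ints (h : IsCell G T v u)
    (hint : ∀ e ∈ T.edgeFinset, f e.2 - f e.1 ∈ ints) :
    IsPinned (vertices G) (f ∘ node G) v u := by
  have hside {x : LPt} (hx : node G x ∈ corners T) : f (node G x) - f (node G v) ∈ ints := by
    obtain heq | hne := eq_or_ne (node G v) (node G x)
    · simp [heq]
    · obtain ⟨e, he, hs⟩ := exists_mem_edgeFinset h.node_mem_corners hx hne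
      exact (sub_mem_ints_iff hs).1 (hint e he)
  exact .inr ⟨hside h.rotate.node_mem_corners, hside h.rotate_twice.node_mem_corners⟩

/-- An edge of `O_h ∪ I_h`, for the cocirculation `h` of increments of `f`. -/
def IsFixedEdge (G : ConvexGrid) (f : Pt → ℝ) (e : Ed) : Prop :=
  e ∈ G.boundary ∧ f e.2 - f e.1 ∈ ints ∨
    ∃ T ∈ G.tris, e ∈ T.edgeFinset ∧ ∀ e' ∈ T.edgeFinset, f e'.2 - f e'.1 ∈ ints

lemma IsFixedEdge.exists_isPinned (he : e ∈ G.edges) (h : IsFixedEdge G f e) :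
    ∃ T v u, IsCell G T v u ∧ s(e.1, e.2) = s(node G v, node G (v + u)) ∧
      IsPinned (vertices G) (f ∘ node G) v u ∧ f (node G (v + u)) - f (node G v) ∈ ints := by
  obtain ⟨hb, hint⟩ | ⟨T, hT, heT, hint⟩ := h
  · obtain ⟨T, hT, heT⟩ := mem_biUnion.1 he
    obtain ⟨v, u, hc, hs⟩ := exists_isCell_of_mem_edgeFinset hT heT
    exact ⟨T, v, u, hc, hs, .inl (hc.opposite_notMem hb heT hs), (sub_mem_ints_iff hs).1 hint⟩
  · obtain ⟨v, u, hc, hs⟩ := exists_isCell_of_mem_edgeFinset hT heT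
    exact ⟨T, v, u, hc, hs, hc.isPinned_of_sub_mem_ints hint,
      (sub_mem_ints_iff hs).1 (hint e heT)⟩

lemma exists_integral_concaveOn (hconc : ConcaveOn ℝ G.region f)
    (haff : ∀ T ∈ G.tris, AffineOn f T.region) :
    ∃ k : Pt → ℝ, ConcaveOn ℝ G.region k ∧ (∀ T ∈ G.tris, AffineOn k T.region) ∧
      (∀ e ∈ G.edges, k e.2 - k e.1 ∈ ints) ∧
      ∀ e ∈ G.edges, IsFixedEdge G f e → k e.2 - k e.1 = f e.2 - f e.1 := by
  obtain ⟨g, hg, hint, heq⟩ := (gridConcave_comp_node hconc haff).exists_integral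
  obtain ⟨k, hk, hkaff, hkg⟩ := exists_concaveOn_extension hg
  have hsub {T v u} (hc : IsCell G T v u) :
      k (node G (v + u)) - k (node G v) = g (v + u) - g v := by
    rw [hkg _ hc.isTriangle.tip, hkg _ hc.isTriangle.base]
  refine ⟨k, hk, hkaff, fun e he => ?_, fun e he hfix => ?_⟩
  · obtain ⟨T, hT, heT⟩ := mem_biUnion.1 he
    obtain ⟨v, u, hc, hs⟩ := exists_isCell_of_mem_edgeFinset hT heT
    rw [sub_mem_ints_iff hs, hsub hc]
    exact hint v u hc.isTriangle
  · obtain ⟨T, v, u, hc, hs, hp, hi⟩ := hfix.exists_isPinned he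
    rw [sub_eq_sub_iff_of_mk_eq hs, hsub hc]
    exact heq v u hc.isTriangle hp hi

end Edges

end TriLattice

/-- Theorem 2.  For any concave cocirculation h in a convex grid G
there is an integer concave cocirculation h' agreeing with h on O_h ∪ I_h, where O_h
is the set of boundary edges with integer h-value and I_h is the set of edges lying in
little triangles all three of whose edges have integer h-values. -/
theorem stmt1 (G : ConvexGrid) (h : Ed → ℝ) (hh : IsConcaveCocirculation G h) :
    ∃ h' : Ed → ℝ, IsConcaveCocirculation G h' ∧
      (∀ e ∈ G.edges, ∃ z : ℤ, h' e = (z : ℝ)) ∧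
      ∀ e ∈ G.edges,
        ((e ∈ G.boundary ∧ ∃ z : ℤ, h e = (z : ℝ)) ∨
          (∃ T ∈ G.tris, e ∈ T.edgeFinset ∧ ∀ f ∈ T.edgeFinset, ∃ z : ℤ, h f = (z : ℝ))) →
        h' e = h e := by
  obtain ⟨-, f, hconc, haff, hdiff⟩ := hh
  obtain ⟨k, hk, hkaff, hint, heq⟩ := TriLattice.exists_integral_concaveOn hconc haff
  refine ⟨fun e => k e.2 - k e.1, ⟨fun T _ => ?_, k, hk, hkaff, fun _ _ => rfl⟩,
    fun e he => TriLattice.mem_ints_iff.1 (hint e he), fun e he hfix => ?_⟩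
  · simp only [GridTriangle.e0, GridTriangle.e1, GridTriangle.e2]
    ring
  · rw [hdiff e he]
    refine heq e he (hfix.imp (fun ⟨hb, hz⟩ => ⟨hb, ?_⟩) fun ⟨T, hT, heT, hz⟩ =>
      ⟨T, hT, heT, fun e' he' => ?_⟩)
    · rwa [← hdiff e he, TriLattice.mem_ints_iff]
    · rw [← hdiff e' (Finset.mem_biUnion.2 ⟨T, hT, he'⟩), TriLattice.mem_ints_iff]
      exact hz e' he'

end
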